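/- arXiv:math/0701263 — 7 statements merged into one kernel-verified Lean document; each statement's English description precedes it below -/
import Mathlib

section
/- Let A be a C*-algebra, H a complex Hilbert space, and n a positive natural number. The map S from CPⁿ(A, L(H)) to CP(A, Mₙ(L(H))) defined by S([ρ_ij])(a) = [ρ_ij(a)] (the n×n operator matrix whose (i,j)-entry is ρ_ij(a)) is an affine order isomorphism: it is bijective, it satisfies S(λρ + (1−λ)θ) = λS(ρ) + (1−λ)S(θ) for all ρ, θ ∈ CPⁿ(A, L(H)) and λ ∈ [0,1], and θ ≤ ρ in CPⁿ(A, L(H)) if and only if S(ρ) − S(θ) is completely positive. -/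
/-!
The map `S` is entrywise evaluation, so injectivity and affinity are immediate. The content is that
`ρ` is completely `n`-positive iff `S ρ` is completely positive, together with the continuity of the
entries of a completely positive `φ : A → Mₙ(L(H))`.

* If `ρ` is completely `n`-positive and `x = y* y` in `Mₘ(A)`, then the amplification of `S ρ` at
  `x` is the amplification of `[ρ_ij]` at `x ⊗ J`, where `J` is the all-ones matrix, and
  `x ⊗ J = (y ⊗ R)* (y ⊗ R)`, where `R` has first row `1` and vanishes elsewhere
  (`isCP_Smap_of_isCnP`).
* Conversely, regard `X ∈ Mₘ(Mₙ(A))`, `X = Y* Y`, as a positive `mn × mn` matrix over `A`.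
  Complete positivity gives `[φ(X_{(k,i),(l,j)})] = Z* Z` in `M_{mn}(Mₙ(L(H)))`, and
  `[φ(X_{(k,i),(l,j)})_ij]` is a principal submatrix of it, hence `W* W` with `W` a rectangular
  matrix having `n · mn` rows. Cutting `W` into `n` square blocks writes it as a sum of `n` terms
  `W_r* W_r`, and such a sum is positive in the C⋆-algebra `Mₘ(Mₙ(L(H)))`
  (`exists_sum_star_mul_self`, `isCnP_of_isCP_Smap`).
* A completely positive `φ` is positive (the case `m = 1`), and positive maps between C⋆-algebras
  are bounded; so are the entries of `φ` (`continuous_entry_of_isCP`).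
-/

noncomputable section

open ContinuousLinearMap

universe u v

variable {A : Type u} [NonUnitalCStarAlgebra A]
variable {H : Type v} [NormedAddCommGroup H] [InnerProductSpace ℂ H] [CompleteSpace H]

/-- A map between star algebras is *completely positive* if each of its matrix
amplifications preserves positivity, where an element of a C⋆-algebra is positive
iff it is of the form `star y * y`. -/
def IsCP {R S : Type*} [NonUnitalSemiring R] [StarRing R]
    [NonUnitalSemiring S] [StarRing S] (φ : R → S) : Prop :=
  ∀ (m : ℕ) (x : Matrix (Fin m) (Fin m) R),
    (∃ y : Matrix (Fin m) (Fin m) R, x = star y * y) →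
    ∃ z : Matrix (Fin m) (Fin m) S, x.map φ = star z * z

/-- The map `Mₙ(A) → Mₙ(L(H))` induced by an `n × n` matrix of maps,
`[a_ij] ↦ [ρ_ij (a_ij)]`. -/
def matApply {n : ℕ} (ρ : Fin n → Fin n → (A →L[ℂ] (H →L[ℂ] H)))
    (x : Matrix (Fin n) (Fin n) A) : Matrix (Fin n) (Fin n) (H →L[ℂ] H) :=
  Matrix.of fun i j => ρ i j (x i j)

/-- An `n × n` matrix of continuous linear maps from `A` to `L(H)` is a
*completely `n`-positive linear map* if the induced map `Mₙ(A) → Mₙ(L(H))` is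
completely positive. -/
def IsCnP {n : ℕ} (ρ : Fin n → Fin n → (A →L[ℂ] (H →L[ℂ] H))) : Prop :=
  IsCP (matApply ρ)

/-- The linear map `S([ρ_ij]) : A →ₗ Mₙ(L(H))`, `a ↦ [ρ_ij (a)]`. -/
def Smap {n : ℕ} (ρ : Fin n → Fin n → (A →L[ℂ] (H →L[ℂ] H))) :
    A →ₗ[ℂ] Matrix (Fin n) (Fin n) (H →L[ℂ] H) where
  toFun a := Matrix.of fun i j => ρ i j a
  map_add' a b := by ext i j; simp
  map_smul' c a := by ext i j; simp

/-- Existence form of `CStarAlgebra.nonneg_iff_eq_star_mul_self`, phrased for an abstract C⋆-algebra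
so that it applies to `CStarMatrix` without searching for its functional calculus. -/
theorem nonneg_iff_exists_star_mul_self {B : Type*} [NonUnitalCStarAlgebra B] [PartialOrder B]
    [StarOrderedRing B] (a : B) : 0 ≤ a ↔ ∃ b, a = star b * b :=
  CStarAlgebra.nonneg_iff_eq_star_mul_self

/-- Sums of elements `w* w` in `Mₘ(Mₙ(L(H)))` have the form `z* z`: the nested matrix algebra is a
C⋆-algebra, where the positive elements form a cone. -/
theorem exists_sum_star_mul_self {m n : ℕ} {ι : Type*} (s : Finset ι)
    (W : ι → Matrix (Fin m) (Fin m) (Matrix (Fin n) (Fin n) (H →L[ℂ] H))) :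
    ∃ z : Matrix (Fin m) (Fin m) (Matrix (Fin n) (Fin n) (H →L[ℂ] H)),
      ∑ r ∈ s, star (W r) * W r = star z * z := by
  let W' : ι → CStarMatrix (Fin m) (Fin m) (CStarMatrix (Fin n) (Fin n) (H →L[ℂ] H)) := W
  have h : 0 ≤ ∑ r ∈ s, star (W' r) * W' r :=
    Finset.sum_nonneg fun r _ => star_mul_self_nonneg (W' r)
  obtain ⟨z, hz⟩ := (nonneg_iff_exists_star_mul_self _).mp h
  exact ⟨z, hz⟩

/-- The amplification of `S ρ` at `x` is that of `[ρ_ij]` at the positive matrix whose `(k, l)` block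
has all its entries equal to `x k l`. -/
theorem isCP_Smap_of_isCnP {n : ℕ} (ρ : Fin n → Fin n → (A →L[ℂ] (H →L[ℂ] H)))
    (h : IsCnP ρ) : IsCP (⇑(Smap ρ)) := by
  rintro m x ⟨y, rfl⟩
  obtain ⟨z, hz⟩ := h m (Matrix.of fun k l => Matrix.of fun _ _ => (star y * y) k l)
    ⟨Matrix.of fun k l => Matrix.of fun i _ => if (i : ℕ) = 0 then y k l else 0, by
      ext k l i j
      cases n with
      | zero => exact i.elim0
      | succ n =>
        simp [Matrix.mul_apply, Matrix.star_apply, Matrix.sum_apply]⟩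
  exact ⟨z, hz⟩

/-- Flatten `Mₘ(Mₙ(A))` to `M_{mn}(A)`, apply `S ρ` entrywise, and keep the entries with inner index
`(i, j)` at outer index `((k, i), (l, j))`. -/
theorem isCnP_of_isCP_Smap {n : ℕ} (ρ : Fin n → Fin n → (A →L[ℂ] (H →L[ℂ] H)))
    (h : IsCP (⇑(Smap ρ))) : IsCnP ρ := by
  rintro m x ⟨y, rfl⟩
  let e : Fin m × Fin n ≃ Fin (m * n) := finProdFinEquiv
  let y' : Matrix (Fin (m * n)) (Fin (m * n)) A := Matrix.of fun p q =>
    y (e.symm p).1 (e.symm q).1 (e.symm p).2 (e.symm q).2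
  obtain ⟨Z, hZ⟩ := h (m * n) _ ⟨y', rfl⟩
  -- `r` runs over the inner row index of `Z`, which survives the passage to the principal submatrix.
  obtain ⟨z, hz⟩ := exists_sum_star_mul_self (Finset.univ : Finset (Fin n))
    (fun r => Matrix.of fun k l => Matrix.of fun i j => Z (e (k, i)) (e (l, j)) r j)
  refine ⟨z, ?_⟩
  rw [← hz]
  ext1 k l
  ext1 i j
  have hx : (star y' * y') (e (k, i)) (e (l, j)) = (star y * y) k l i j := by
    simp only [Matrix.mul_apply, Matrix.star_apply, Matrix.sum_apply]
    rw [← e.sum_comp, Fintype.sum_prod_type]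
    simp [y']
  have hZ' := congrFun (congrFun (congrFun (congrFun hZ (e (k, i))) (e (l, j))) i) j
  have hL : (Matrix.map (star y * y) (matApply ρ)) k l i j
      = (Matrix.map (star y' * y') (Smap ρ)) (e (k, i)) (e (l, j)) i j := by
    simp only [Matrix.map_apply, hx]
    rfl
  rw [hL, hZ']
  simp only [Matrix.mul_apply, Matrix.star_apply, Matrix.sum_apply, Matrix.of_apply]
  refine Finset.sum_comm.trans (Finset.sum_congr rfl fun r _ => ?_)
  rw [← e.sum_comp, Fintype.sum_prod_type]

/-- The entries of a completely positive map are continuous, because positive maps between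
C⋆-algebras are. -/
theorem continuous_entry_of_isCP {n : ℕ} (φ : A →ₗ[ℂ] Matrix (Fin n) (Fin n) (H →L[ℂ] H))
    (h : IsCP (⇑φ)) (i j : Fin n) : Continuous fun a => φ a i j := by
  let : PartialOrder A := CStarAlgebra.spectralOrder A
  have : StarOrderedRing A := CStarAlgebra.spectralOrderedRing A
  let ψ : A →ₗ[ℂ] CStarMatrix (Fin n) (Fin n) (H →L[ℂ] H) :=
    CStarMatrix.ofMatrixₗ.toLinearMap ∘ₗ φ
  have hpos : ∀ a, 0 ≤ a → 0 ≤ ψ a := by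
    intro a ha
    obtain ⟨b, rfl⟩ := CStarAlgebra.nonneg_iff_eq_star_mul_self.mp ha
    obtain ⟨z, hz⟩ := h 1 (Matrix.of fun _ _ => star b * b)
      ⟨Matrix.of fun _ _ => b, by ext; simp [Matrix.mul_apply, Matrix.star_apply]⟩
    have hz0 : φ (star b * b) = star (z 0 0) * z 0 0 := by
      simpa [Matrix.mul_apply, Matrix.star_apply] using congrFun (congrFun hz 0) 0
    exact (nonneg_iff_exists_star_mul_self _).mpr ⟨z 0 0, hz0⟩
  have hc : Continuous (PositiveLinearMap.mk₀ ψ hpos) := map_continuous _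
  have hc' : Continuous fun a => CStarMatrix.ofMatrixL.symm (PositiveLinearMap.mk₀ ψ hpos a) :=
    (CStarMatrix.ofMatrixL (A := H →L[ℂ] H)).symm.continuous.comp hc
  exact hc'.matrix_elem i j

/-- The map `S : CPⁿ(A, L(H)) → CP(A, Mₙ(L(H)))`, `S([ρ_ij])(a) = [ρ_ij(a)]`, is an
affine order isomorphism. -/
theorem statement0 (n : ℕ) :
    (∀ ρ : Fin n → Fin n → (A →L[ℂ] (H →L[ℂ] H)), IsCnP ρ → IsCP (⇑(Smap ρ))) ∧
    (∀ ρ θ : Fin n → Fin n → (A →L[ℂ] (H →L[ℂ] H)), IsCnP ρ → IsCnP θ →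
      Smap ρ = Smap θ → ρ = θ) ∧
    (∀ φ : A →ₗ[ℂ] Matrix (Fin n) (Fin n) (H →L[ℂ] H), IsCP (⇑φ) →
      ∃ ρ : Fin n → Fin n → (A →L[ℂ] (H →L[ℂ] H)), IsCnP ρ ∧ Smap ρ = φ) ∧
    (∀ ρ θ : Fin n → Fin n → (A →L[ℂ] (H →L[ℂ] H)), IsCnP ρ → IsCnP θ →
      ∀ lam : ℝ, 0 ≤ lam → lam ≤ 1 →
        Smap (fun i j => (lam : ℂ) • ρ i j + ((1 - lam : ℝ) : ℂ) • θ i j) =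
          (lam : ℂ) • Smap ρ + ((1 - lam : ℝ) : ℂ) • Smap θ) ∧
    (∀ ρ θ : Fin n → Fin n → (A →L[ℂ] (H →L[ℂ] H)), IsCnP ρ → IsCnP θ →
      (IsCnP (fun i j => ρ i j - θ i j) ↔ IsCP (⇑(Smap ρ - Smap θ)))) := by
  refine ⟨fun ρ => isCP_Smap_of_isCnP ρ, ?_, ?_, ?_, ?_⟩
  · intro ρ θ _ _ h
    ext1 i
    ext1 j
    ext1 a
    exact congrFun (congrFun (LinearMap.congr_fun h a) i) j
  · intro φ hφ
    let ρ : Fin n → Fin n → (A →L[ℂ] (H →L[ℂ] H)) := fun i j =>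
      { toFun := fun a => φ a i j
        map_add' := fun a b => by simp
        map_smul' := fun c a => by simp
        cont := continuous_entry_of_isCP φ hφ i j }
    have hρ : Smap ρ = φ := rfl
    exact ⟨ρ, isCnP_of_isCP_Smap ρ (hρ ▸ hφ), hρ⟩
  · intro ρ θ _ _ lam _ _
    rfl
  · intro ρ θ _ _
    have h : Smap ρ - Smap θ = Smap (fun i j => ρ i j - θ i j) := rfl
    rw [h]
    exact ⟨isCP_Smap_of_isCnP _, isCnP_of_isCP_Smap _⟩
end
end

section
/- Let A be a C*-algebra, H a complex Hilbert space, and ρ = [ρ_ij] a completely n-positive linear map from A to L(H). Then there exist a Hilbert space H_ρ, a *-homomorphism Φ_ρ : A → L(H_ρ), and operators V_{ρ,1}, …, V_{ρ,n} ∈ L(H, H_ρ) such that (1) ρ_ij(a) = V_{ρ,i}* Φ_ρ(a) V_{ρ,j} for all a ∈ A and all i, j ∈ {1, …, n}, and (2) the set {Φ_ρ(a)V_{ρ,i}ξ : a ∈ A, ξ ∈ H, 1 ≤ i ≤ n} spans a dense subspace of H_ρ. -/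
/-!
The proof is the Stinespring (GNS) construction. On finitely supported functions `H → Aⁿ`, seen as
formal sums of `a ⊗ eᵢ ⊗ ξ`, put the form
`⟪f, g⟫ = ∑ ⟪ξ, ρᵢⱼ(f(ξ)ᵢ* g(η)ⱼ) η⟫`.
Complete `n`-positivity, applied to a matrix `y* y` with all rows of `y` equal, makes it positive
semidefinite (`form_self`). Left multiplication by `a` is bounded by `‖a‖`, since
`‖a‖² - a* a = b* b` in the unitization of `A` and left multiplication by `b` preserves `A`
(`exists_factor`, `form_mulLeft_le`); hence it extends to a `*`-homomorphism `Φ` on the completion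
(`completionHom`).

As `A` need not have a unit, `Vᵢ` cannot be defined by `ξ ↦ 1 ⊗ eᵢ ⊗ ξ`. Instead its adjoint is
defined, as the extension of `f ↦ ∑ ρᵢⱼ(f(η)ⱼ) η` (`rowMap`). This map is bounded because of
the Cauchy-Schwarz inequality for its compositions with left multiplication by elements `u` of the
unit ball, and an approximate unit (`rowMap_mem_closure`, `norm_rowMap_le_of_pre`). Then
`Φ(a) Vᵢ ξ` is the class of `a ⊗ eᵢ ⊗ ξ`, which yields both the formula for `ρᵢⱼ` and density
(`stinespring_of_pre`).
-/

noncomputable section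

open ContinuousLinearMap

universe u v

variable {A : Type u} [NonUnitalCStarAlgebra A]
variable {H : Type v} [NormedAddCommGroup H] [InnerProductSpace ℂ H] [CompleteSpace H]

/-- `(Φ, K, V 0, …, V (n-1))` is a Stinespring representation of the completely
`n`-positive map `ρ = [ρ_ij]` : `Φ` is a (continuous) `*`-homomorphism,
`ρ_ij (a) = (V i)* (Φ a) (V j)`, and the vectors `Φ a (V i ξ)` span a dense
subspace of `K`. -/
def IsStinespringRep {n : ℕ} (ρ : Fin n → Fin n → (A →L[ℂ] (H →L[ℂ] H)))
    {K : Type*} [NormedAddCommGroup K] [InnerProductSpace ℂ K] [CompleteSpace K]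
    (Φ : A →⋆ₙₐ[ℂ] (K →L[ℂ] K)) (V : Fin n → (H →L[ℂ] K)) : Prop :=
  Continuous (⇑Φ) ∧
  (∀ (i j : Fin n) (a : A), ρ i j a = (adjoint (V i)).comp ((Φ a).comp (V j))) ∧
  Dense ((Submodule.span ℂ
    {x : K | ∃ (a : A) (ξ : H) (i : Fin n), x = Φ a (V i ξ)} : Submodule ℂ K) : Set K)


/-- The data of a Stinespring representation of `ρ`. -/
structure StinespringData {n : ℕ} (ρ : Fin n → Fin n → (A →L[ℂ] (H →L[ℂ] H))) where
  K : Type (max u v)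
  [instNormed : NormedAddCommGroup K]
  [instInner : InnerProductSpace ℂ K]
  [instComplete : CompleteSpace K]
  Φ : A →⋆ₙₐ[ℂ] (K →L[ℂ] K)
  V : Fin n → (H →L[ℂ] K)
  isRep : IsStinespringRep ρ Φ V

open scoped InnerProductSpace

set_option linter.unusedSectionVars false

/-! ### The algebraic module and its sesquilinear form -/

/-- Entrywise application of a linear map `S : A → A` to finitely supported functions
`H → Aⁿ`. The function `f` stands for the formal sum of the vectors `f(ξ)ᵢ ⊗ eᵢ ⊗ ξ`, that is,
`H →₀ (Fin n → A)` is a free version of `A ⊗ ℂⁿ ⊗ H`, in which nothing is yet identified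
in the variable `ξ`. Left multiplication by `a` is `amp (LinearMap.mulLeft ℂ a)`. -/
def amp {n : ℕ} (S : A →ₗ[ℂ] A) : (H →₀ (Fin n → A)) →ₗ[ℂ] (H →₀ (Fin n → A)) :=
  Finsupp.mapRange.linearMap (S.compLeft (Fin n))

/-- The linear map `f ↦ ∑_η ∑ⱼ ρᵢⱼ(f(η)ⱼ) η`. It descends to the map `Vᵢ*` of the dilation. -/
def rowMap {n : ℕ} (ρ : Fin n → Fin n → (A →L[ℂ] (H →L[ℂ] H))) (i : Fin n) :
    (H →₀ (Fin n → A)) →ₗ[ℂ] H :=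
  Finsupp.lsum ℂ fun η => ∑ j, (ContinuousLinearMap.apply ℂ H η).toLinearMap ∘ₗ
    (ρ i j).toLinearMap ∘ₗ LinearMap.proj j

variable {n : ℕ} (ρ : Fin n → Fin n → (A →L[ℂ] (H →L[ℂ] H)))

lemma amp_apply (S : A →ₗ[ℂ] A) (f : H →₀ (Fin n → A)) (ξ : H) (i : Fin n) :
    amp S f ξ i = S (f ξ i) := by
  simp [amp]

lemma rowMap_apply (i : Fin n) (f : H →₀ (Fin n → A)) :
    rowMap ρ i f = f.sum fun η y => ∑ j, ρ i j (y j) η := by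
  simp [rowMap, Finsupp.lsum_apply, Finsupp.sum]

lemma rowMap_single (i : Fin n) (η : H) (y : Fin n → A) :
    rowMap ρ i (Finsupp.single η y) = ∑ j, ρ i j (y j) η := by
  simp [rowMap_apply]

lemma rowMap_amp (i : Fin n) (S : A →ₗ[ℂ] A) (f : H →₀ (Fin n → A)) :
    rowMap ρ i (amp S f) = f.sum fun η y => ∑ j, ρ i j (S (y j)) η := by
  rw [rowMap_apply, amp, Finsupp.mapRange.linearMap_apply, Finsupp.sum_mapRange_index]
  · simp
  · simp

/-- The sesquilinear form `⟪f, g⟫ = ∑_ξ ∑_η ∑ᵢ ∑ⱼ ⟪ξ, ρᵢⱼ(f(ξ)ᵢ* g(η)ⱼ) η⟫`, conjugate-linear in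
`f`; the inner sum over `η` and `j` is packaged in `rowMap`. -/
def form (f g : H →₀ (Fin n → A)) : ℂ :=
  f.sum fun ξ x => ∑ i, ⟪ξ, rowMap ρ i (amp (LinearMap.mulLeft ℂ (star (x i))) g)⟫_ℂ

lemma amp_add_left (S T : A →ₗ[ℂ] A) (f : H →₀ (Fin n → A)) :
    amp (S + T) f = amp S f + amp T f := by
  ext; simp [amp_apply]

lemma amp_smul_left (c : ℂ) (S : A →ₗ[ℂ] A) (f : H →₀ (Fin n → A)) :
    amp (c • S) f = c • amp S f := by
  ext; simp [amp_apply]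

lemma amp_amp (S T : A →ₗ[ℂ] A) (f : H →₀ (Fin n → A)) :
    amp S (amp T f) = amp (S ∘ₗ T) f := by
  ext; simp [amp_apply]

lemma mulLeft_add' (a b : A) : LinearMap.mulLeft ℂ (a + b) =
    LinearMap.mulLeft ℂ a + LinearMap.mulLeft ℂ b := by
  ext; simp [add_mul]

lemma mulLeft_smul' (c : ℂ) (a : A) : LinearMap.mulLeft ℂ (c • a) =
    c • LinearMap.mulLeft ℂ a := by
  ext; simp [smul_mul_assoc]

/-- The summand of `form` vanishes at `x = 0`, as the `Finsupp.sum` lemmas require. -/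
lemma form_zero_aux (g : H →₀ (Fin n → A)) (ξ : H) :
    ∑ i : Fin n, ⟪ξ, rowMap ρ i (amp (LinearMap.mulLeft ℂ (star ((0 : Fin n → A) i))) g)⟫_ℂ
      = 0 := by
  refine Finset.sum_eq_zero fun i _ => ?_
  rw [rowMap_amp]
  simp

lemma form_add_left (f f' g : H →₀ (Fin n → A)) :
    form ρ (f + f') g = form ρ f g + form ρ f' g := by
  unfold form
  refine Finsupp.sum_add_index' (fun ξ => form_zero_aux ρ g ξ) fun ξ x y => ?_
  simp [mulLeft_add', amp_add_left, Finset.sum_add_distrib]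

lemma form_smul_left (c : ℂ) (f g : H →₀ (Fin n → A)) :
    form ρ (c • f) g = star c * form ρ f g := by
  unfold form
  rw [Finsupp.sum_smul_index' (fun ξ => form_zero_aux ρ g ξ), Finsupp.sum, Finsupp.sum,
    Finset.mul_sum]
  refine Finset.sum_congr rfl fun ξ _ => ?_
  simp [mulLeft_smul', amp_smul_left, Finset.mul_sum]

lemma form_add_right (f g g' : H →₀ (Fin n → A)) :
    form ρ f (g + g') = form ρ f g + form ρ f g' := by
  simp [form, Finset.sum_add_distrib, Finsupp.sum]

lemma form_smul_right (c : ℂ) (f g : H →₀ (Fin n → A)) :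
    form ρ f (c • g) = c * form ρ f g := by
  simp [form, Finsupp.sum, Finset.mul_sum]

lemma form_amp_left (S : A →ₗ[ℂ] A) (f g : H →₀ (Fin n → A)) :
    form ρ (amp S f) g = f.sum fun ξ x =>
      ∑ i, ⟪ξ, rowMap ρ i (amp (LinearMap.mulLeft ℂ (star (S (x i)))) g)⟫_ℂ := by
  unfold form
  rw [amp, Finsupp.mapRange.linearMap_apply, Finsupp.sum_mapRange_index]
  · simp
  · intro ξ; exact form_zero_aux ρ g ξ

lemma form_single_left (ξ : H) (x : Fin n → A) (g : H →₀ (Fin n → A)) :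
    form ρ (Finsupp.single ξ x) g =
      ∑ i, ⟪ξ, rowMap ρ i (amp (LinearMap.mulLeft ℂ (star (x i))) g)⟫_ℂ :=
  Finsupp.sum_single_index (form_zero_aux ρ g ξ)

/-- Left multiplication by `a*` is the adjoint of left multiplication by `a` for `form`. -/
lemma form_amp_comm (a : A) (f g : H →₀ (Fin n → A)) :
    form ρ (amp (LinearMap.mulLeft ℂ (star a)) f) g =
      form ρ f (amp (LinearMap.mulLeft ℂ a) g) := by
  rw [form_amp_left]
  unfold form
  simp [amp_amp, ← LinearMap.mulLeft_mul]

lemma form_eq_sum (f g : H →₀ (Fin n → A)) :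
    form ρ f g = ∑ ξ ∈ f.support, ∑ i, ⟪ξ, ∑ η ∈ g.support, ∑ j,
      ρ i j (star (f ξ i) * g η j) η⟫_ℂ := by
  simp [form, rowMap_amp, Finsupp.sum]

/-- Moves the third pair of summation indices to the front and the first pair to the back. -/
lemma sum_rotate {ι κ M : Type*} [Fintype ι] [Fintype κ] [AddCommMonoid M]
    (F : ι → κ → ι → κ → ι → κ → M) :
    ∑ k, ∑ i, ∑ l, ∑ j, ∑ p, ∑ r, F k i l j p r =
      ∑ p, ∑ r, ∑ l, ∑ j, ∑ k, ∑ i, F k i l j p r := by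
  calc _ = ∑ x : ι × κ, ∑ y : ι × κ, ∑ q : ι × κ, F x.1 x.2 y.1 y.2 q.1 q.2 := by
        simp only [Fintype.sum_prod_type]
    _ = ∑ y : ι × κ, ∑ x : ι × κ, ∑ q : ι × κ, F x.1 x.2 y.1 y.2 q.1 q.2 := Finset.sum_comm
    _ = ∑ y : ι × κ, ∑ q : ι × κ, ∑ x : ι × κ, F x.1 x.2 y.1 y.2 q.1 q.2 :=
        Finset.sum_congr rfl fun _ _ => Finset.sum_comm
    _ = ∑ q : ι × κ, ∑ y : ι × κ, ∑ x : ι × κ, F x.1 x.2 y.1 y.2 q.1 q.2 := Finset.sum_comm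
    _ = _ := by simp only [Fintype.sum_prod_type]

/-- The quadratic form of `z* z`, for `z` a matrix of operator matrices, is a sum of squares. -/
lemma gram_sum {m : ℕ} (z : Matrix (Fin m) (Fin m) (Matrix (Fin n) (Fin n) (H →L[ℂ] H)))
    (ξ : Fin m → H) :
    ∑ k, ∑ i, ⟪ξ k, ∑ l, ∑ j, (star z * z) k l i j (ξ l)⟫_ℂ =
      ∑ p, ∑ r, ⟪∑ l, ∑ j, z p l r j (ξ l), ∑ l, ∑ j, z p l r j (ξ l)⟫_ℂ := by
  have h : ∀ k l i j, (star z * z) k l i j (ξ l) =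
      ∑ p, ∑ r, (adjoint (z p k r i)) (z p l r j (ξ l)) := by
    intro k l i j
    simp [Matrix.mul_apply, Matrix.star_apply, Matrix.sum_apply,
      ContinuousLinearMap.star_eq_adjoint]
  simp only [h, inner_sum, sum_inner, adjoint_inner_right]
  exact sum_rotate fun k i l j p r => ⟪z p k r i (ξ k), z p l r j (ξ l)⟫_ℂ

/-- Complete `n`-positivity makes `form` positive semidefinite. Let `ξ₁, …, ξₘ` be the support of
`f` and let `y ∈ Mₘ(Mₙ(A))` have all its rows equal, its entry in the column indexed by `(k, i)`
being `f(ξₖ)ᵢ`. Applying `ρ` to `y* y` gives a matrix whose quadratic form at the vectors `ξₖ` is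
`m n · ⟪f, f⟫`, because every one of the `m n` rows contributes the same amount. -/
lemma form_self (hρ : IsCnP ρ) (f : H →₀ (Fin n → A)) : ∃ r : ℝ, 0 ≤ r ∧ form ρ f f = r := by
  obtain ⟨m, ⟨σ⟩⟩ : ∃ m : ℕ, Nonempty (Fin m ≃ f.support) :=
    ⟨_, ⟨f.support.equivFin.symm⟩⟩
  let ξ : Fin m → H := fun k => σ k
  have hform : form ρ f f = ∑ k, ∑ i,
      ⟪ξ k, ∑ l, ∑ j, ρ i j (star (f (ξ k) i) * f (ξ l) j) (ξ l)⟫_ℂ := by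
    rw [form_eq_sum, ← Finset.sum_coe_sort, ← σ.sum_comp]
    refine Finset.sum_congr rfl fun k _ => Finset.sum_congr rfl fun i _ => ?_
    rw [← Finset.sum_coe_sort, ← σ.sum_comp]
  obtain ⟨z, hz⟩ := hρ m _ ⟨Matrix.of fun _ k => Matrix.of fun _ i => f (ξ k) i, rfl⟩
  have hG := gram_sum z ξ
  rw [← hz] at hG
  have h1 : ∑ k, ∑ i, ⟪ξ k, ∑ l, ∑ j, ρ i j (star (f (ξ k) i) * f (ξ l) j) (ξ l)⟫_ℂ * (m * n) =
      ∑ p, ∑ r, ⟪∑ l, ∑ j, z p l r j (ξ l), ∑ l, ∑ j, z p l r j (ξ l)⟫_ℂ := by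
    rw [← hG]
    refine Finset.sum_congr rfl fun k _ => Finset.sum_congr rfl fun i _ => ?_
    rw [mul_comm, ← inner_smul_right]
    congr 1
    simp [matApply, Matrix.mul_apply, Matrix.star_apply, Matrix.sum_apply, Finset.smul_sum,
      ← Nat.cast_smul_eq_nsmul ℂ, smul_smul]
  have h2 : form ρ f f * (m * n) =
      ((∑ p, ∑ r, ‖∑ l, ∑ j, z p l r j (ξ l)‖ ^ 2 : ℝ) : ℂ) := by
    rw [hform]
    simp only [Finset.sum_mul, h1, inner_self_eq_norm_sq_to_K]
    simp
  -- If `m = 0` or `n = 0`, the sum defining the form is empty; otherwise divide by `m n`.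
  by_cases hmn : (m : ℂ) * n = 0
  · refine ⟨0, le_rfl, ?_⟩
    rw [hform]
    rcases mul_eq_zero.mp hmn with h | h
    · obtain rfl : m = 0 := by exact_mod_cast h
      simp
    · obtain rfl : n = 0 := by exact_mod_cast h
      simp
  · refine ⟨(∑ p, ∑ r, ‖∑ l, ∑ j, z p l r j (ξ l)‖ ^ 2) / (m * n), by positivity, ?_⟩
    rw [eq_div_of_mul_eq hmn h2]
    push_cast
    rfl

/-! ### Boundedness of left multiplication -/

/-- The element `‖a‖² - a* a` is positive in the unitization of `A`, so it equals `b* b` there.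
Since `A` is an ideal of its unitization, left multiplication by `b` restricts to a linear map
`S` on `A`, which plays the role of the square root of `‖a‖² - a* a`. -/
lemma exists_factor (a : A) : ∃ S : A →ₗ[ℂ] A, ∀ x y : A,
    star (S x) * S y = ((‖a‖ ^ 2 : ℝ) : ℂ) • (star x * y) - star (a * x) * (a * y) := by
  let := CStarAlgebra.spectralOrder (Unitization ℂ A)
  have := CStarAlgebra.spectralOrderedRing (Unitization ℂ A)
  have h := CStarAlgebra.star_mul_le_algebraMap_norm_sq (a := (a : Unitization ℂ A))
  obtain ⟨b, hb⟩ := CStarAlgebra.nonneg_iff_eq_star_mul_self.mp (sub_nonneg.mpr h)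
  have key : ∀ x : A, ((b * (x : Unitization ℂ A)).snd : Unitization ℂ A) = b * x := by
    intro x
    ext <;> simp
  refine ⟨{ toFun := fun x => (b * (x : Unitization ℂ A)).snd
            map_add' := fun x y => by simp [mul_add]
            map_smul' := fun c x => by
              rw [Unitization.inr_smul, mul_smul_comm, Unitization.snd_smul, RingHom.id_apply] },
    fun x y => ?_⟩
  apply Unitization.inr_injective (R := ℂ)
  simp only [LinearMap.coe_mk, AddHom.coe_mk, Unitization.inr_mul, Unitization.inr_star, key,
    Unitization.inr_sub, Unitization.inr_smul]
  rw [star_mul, mul_assoc, ← mul_assoc (star b), ← hb, sub_mul, mul_sub, Unitization.norm_inr]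
  congr 1
  · rw [IsScalarTower.algebraMap_apply ℝ ℂ (Unitization ℂ A), ← Algebra.smul_def, mul_smul_comm]
    rfl
  · simp only [star_mul, mul_assoc]

/-- With `S` as in `exists_factor`, `⟪S f, S f⟫ = ‖a‖² ⟪f, f⟫ - ⟪a f, a f⟫`, and the left side is
nonnegative. -/
lemma form_mulLeft_le (hρ : IsCnP ρ) (a : A) (f : H →₀ (Fin n → A)) :
    (form ρ (amp (LinearMap.mulLeft ℂ a) f) (amp (LinearMap.mulLeft ℂ a) f)).re ≤
      ‖a‖ ^ 2 * (form ρ f f).re := by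
  obtain ⟨S, hS⟩ := exists_factor a
  have hcomp : ∀ x : A, LinearMap.mulLeft ℂ (star (S x)) ∘ₗ S =
      ((‖a‖ ^ 2 : ℝ) : ℂ) • LinearMap.mulLeft ℂ (star x) +
        (-1 : ℂ) • (LinearMap.mulLeft ℂ (star (a * x)) ∘ₗ LinearMap.mulLeft ℂ a) := by
    intro x
    ext y
    simp only [LinearMap.comp_apply, LinearMap.mulLeft_apply, LinearMap.add_apply,
      LinearMap.smul_apply, hS]
    module
  have h : form ρ (amp S f) (amp S f) = ((‖a‖ ^ 2 : ℝ) : ℂ) * form ρ f f -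
      form ρ (amp (LinearMap.mulLeft ℂ a) f) (amp (LinearMap.mulLeft ℂ a) f) := by
    rw [form_amp_left, form_amp_left]
    unfold form
    simp only [amp_amp, hcomp, amp_add_left, amp_smul_left, map_add, map_smul, inner_add_right,
      inner_smul_right, Finsupp.sum, Finset.sum_add_distrib, ← Finset.mul_sum,
      LinearMap.mulLeft_apply]
    ring
  obtain ⟨r, hr, hrS⟩ := form_self ρ hρ (amp S f)
  have := congrArg Complex.re (hrS.symm.trans h)
  rw [Complex.sub_re, Complex.re_ofReal_mul, Complex.ofReal_re] at this
  linarith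

/-- A sesquilinear form that is real on the diagonal is Hermitian; this is polarization with
`f + g` and `f + i g`. -/
lemma form_conj_symm (hρ : IsCnP ρ) (f g : H →₀ (Fin n → A)) :
    (starRingEnd ℂ) (form ρ g f) = form ρ f g := by
  have him : ∀ h, (form ρ h h).im = 0 := by
    intro h
    obtain ⟨r, -, hr⟩ := form_self ρ hρ h
    simp [hr]
  have h1 := him (f + g)
  have h2 := him (f + Complex.I • g)
  simp only [form_add_left, form_add_right, form_smul_left, form_smul_right, Complex.add_im,
    him, Complex.mul_im] at h1 h2
  simp [him] at h1 h2
  apply Complex.ext <;> simp <;> linarith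

/-- The semi-inner product on `H →₀ (Fin n → A)` given by `form`. It may be degenerate; completing
will quotient by its null space. -/
@[reducible] def formCore (hρ : IsCnP ρ) : PreInnerProductSpace.Core ℂ (H →₀ (Fin n → A)) where
  inner f g := form ρ f g
  conj_inner_symm f g := form_conj_symm ρ hρ f g
  re_inner_nonneg f := by
    obtain ⟨r, hr, h⟩ := form_self ρ hρ f
    simpa [h] using hr
  add_left f f' g := form_add_left ρ f f' g
  smul_left f g c := form_smul_left ρ c f g

open scoped Topology in
/-- An approximate unit of `A` in the unit ball replaces the unit: `rowMap ρ i g` is a limit of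
`rowMap ρ i (u g)`, where `u` runs through it. -/
lemma rowMap_mem_closure (i : Fin n) (g : H →₀ (Fin n → A)) :
    rowMap ρ i g ∈ closure ((fun u : A => rowMap ρ i (amp (LinearMap.mulLeft ℂ u) g)) ''
      Metric.closedBall (0 : A) 1) := by
  let := CStarAlgebra.spectralOrder A
  have := CStarAlgebra.spectralOrderedRing A
  have hl := CStarAlgebra.increasingApproximateUnit A
  have ht : Filter.Tendsto (fun u : A => rowMap ρ i (amp (LinearMap.mulLeft ℂ u) g))
      (CStarAlgebra.approximateUnit A) (𝓝 (rowMap ρ i g)) := by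
    simp only [rowMap_amp]
    rw [rowMap_apply]
    refine tendsto_finsetSum _ fun η _ => tendsto_finsetSum _ fun j _ => ?_
    have hc : Continuous fun b : A => ρ i j b η := by fun_prop
    exact (hc.tendsto _).comp (hl.tendsto_mul_right (g η j))
  refine mem_closure_of_tendsto ht ?_
  filter_upwards [hl.eventually_norm] with u hu
  exact ⟨u, by simpa using hu, rfl⟩

lemma span_single : Submodule.span ℂ {x : H →₀ (Fin n → A) | ∃ (a : A) (ξ : H) (i : Fin n),
    x = Finsupp.single ξ (Pi.single i a)} = ⊤ := by
  rw [eq_top_iff]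
  rintro f -
  induction f using Finsupp.induction_linear with
  | zero => exact zero_mem _
  | add f g hf hg => exact add_mem hf hg
  | single ξ y =>
    rw [← Finset.univ_sum_single y, Finsupp.single_finsetSum]
    exact sum_mem fun i _ => Submodule.subset_span ⟨y i, ξ, i, rfl⟩

/-! ### Passing to the completion -/

/-- Here `L a` is left multiplication by `a`, `T i` is `rowMap ρ i`, and `e i a ξ` is the generator
`Φ(a) Vᵢ ξ`. The hypothesis `he` bounds `T i (L u x)` in terms of `‖u‖ ≤ 1`: with `w = T i (L u x)`,
`‖w‖² = ⟪e i u* w, x⟫ ≤ ‖e i u* w‖ ‖x‖ ≤ √‖ρᵢᵢ‖ ‖w‖ ‖x‖`. The bound passes to the closure. -/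
lemma norm_rowMap_le_of_pre {X : Type*} [SeminormedAddCommGroup X] [InnerProductSpace ℂ X]
    (L : A → X → X) (T : Fin n → X → H) (e : Fin n → A → H → X)
    (hT : ∀ i x, T i x ∈ closure ((fun u => T i (L u x)) '' Metric.closedBall (0 : A) 1))
    (hTe : ∀ i j a ξ, T i (e j a ξ) = ρ i j a ξ)
    (hLe : ∀ i a b ξ, L a (e i b ξ) = e i (a * b) ξ)
    (he : ∀ i a ξ x, ⟪e i a ξ, x⟫_ℂ = ⟪ξ, T i (L (star a) x)⟫_ℂ) (i : Fin n) (x : X) :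
    ‖T i x‖ ≤ √‖ρ i i‖ * ‖x‖ := by
  -- `‖e i a ξ‖² = ⟪ξ, ρᵢᵢ(a* a) ξ⟫`.
  have he_norm : ∀ i a ξ, ‖e i a ξ‖ ^ 2 ≤ ‖ρ i i‖ * ‖a‖ ^ 2 * ‖ξ‖ ^ 2 := by
    intro i a ξ
    rw [← inner_self_eq_norm_sq (𝕜 := ℂ), he, hLe, hTe]
    refine (RCLike.re_le_norm _).trans ((norm_inner_le_norm _ _).trans ?_)
    have h1 := (ρ i i (star a * a)).le_opNorm ξ
    have h2 := (ρ i i).le_opNorm (star a * a)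
    rw [CStarRing.norm_star_mul_self] at h2
    nlinarith [norm_nonneg ξ, mul_le_mul_of_nonneg_right h2 (norm_nonneg ξ)]
  have hT_sq : ∀ i x, ‖T i x‖ ^ 2 ≤ ‖ρ i i‖ * ‖x‖ ^ 2 := by
    intro i x
    have hcl : IsClosed {w : H | ‖w‖ ^ 2 ≤ ‖ρ i i‖ * ‖x‖ ^ 2} :=
      isClosed_le (by fun_prop) (by fun_prop)
    refine closure_minimal ?_ hcl (hT i x)
    rintro _ ⟨u, hu, rfl⟩
    have hu : ‖u‖ ≤ 1 := by simpa using hu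
    set w := T i (L u x) with hw
    change ‖w‖ ^ 2 ≤ _
    have h1 : ‖w‖ ^ 2 ≤ ‖e i (star u) w‖ * ‖x‖ := by
      rw [← inner_self_eq_norm_sq (𝕜 := ℂ)]
      have := he i (star u) w x
      rw [star_star, ← hw] at this
      rw [← this]
      exact (RCLike.re_le_norm _).trans (norm_inner_le_norm _ _)
    have h2 : ‖e i (star u) w‖ ^ 2 ≤ ‖ρ i i‖ * ‖w‖ ^ 2 := by
      refine (he_norm i (star u) w).trans ?_
      rw [norm_star]
      have : ‖u‖ ^ 2 ≤ 1 := pow_le_one₀ (norm_nonneg u) hu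
      gcongr
      exact mul_le_of_le_one_right (norm_nonneg _) this
    by_cases hw0 : ‖w‖ = 0
    · rw [hw0, zero_pow two_ne_zero]; positivity
    · have hpos : 0 < ‖w‖ ^ 2 := pow_pos ((norm_nonneg w).lt_of_ne' hw0) 2
      have h3 : (‖w‖ ^ 2) ^ 2 ≤ (‖e i (star u) w‖ * ‖x‖) ^ 2 := by gcongr
      refine le_of_mul_le_mul_left ?_ hpos
      nlinarith [mul_le_mul_of_nonneg_right h2 (sq_nonneg ‖x‖)]
  · refine abs_le_of_sq_le_sq' ?_ (by positivity) |>.2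
    rw [mul_pow, Real.sq_sqrt (norm_nonneg _)]
    exact hT_sq i x

open UniformSpace in
lemma completion_ext {X : Type*} [SeminormedAddCommGroup X] [InnerProductSpace ℂ X]
    {S T : Completion X →L[ℂ] Completion X}
    (h : ∀ x : X, S (x : Completion X) = T (x : Completion X)) : S = T := by
  ext x
  induction x using Completion.induction_on with
  | hp => exact isClosed_eq S.continuous T.continuous
  | ih x => exact h x

open UniformSpace in
/-- The `*`-homomorphism of `A` into the operators on the completion of `X` obtained by extending
an action `L` of `A` on a semi-inner product space `X` by bounded operators with
`⟪L (a*) x, y⟫ = ⟪x, L a y⟫`. -/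
def completionHom {X : Type*} [SeminormedAddCommGroup X] [InnerProductSpace ℂ X]
    (L : A →ₗ[ℂ] X →ₗ[ℂ] X)
    (hL_mul : ∀ a b x, L (a * b) x = L a (L b x))
    (hL_star : ∀ a x y, ⟪L (star a) x, y⟫_ℂ = ⟪x, L a y⟫_ℂ)
    (hL_norm : ∀ a x, ‖L a x‖ ≤ ‖a‖ * ‖x‖) :
    A →⋆ₙₐ[ℂ] (Completion X →L[ℂ] Completion X) :=
  have hc : ∀ a (x : X), ((L a).mkContinuous ‖a‖ (hL_norm a)).completion (x : Completion X) =
      ((L a x : X) : Completion X) := fun a x =>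
    ContinuousLinearMap.completion_apply_coe ((L a).mkContinuous ‖a‖ (hL_norm a)) x
  { toFun := fun a => ((L a).mkContinuous ‖a‖ (hL_norm a)).completion
    map_smul' := fun c a => completion_ext fun x => by
      rw [_root_.smul_apply, hc, hc, map_smul, LinearMap.smul_apply,
        Completion.coe_smul]
      rfl
    map_zero' := completion_ext fun x => by
      rw [hc, map_zero]
      rfl
    map_add' := fun a b => completion_ext fun x => by
      rw [_root_.add_apply, hc, hc, hc, map_add, LinearMap.add_apply,
        Completion.coe_add]
    map_mul' := fun a b => completion_ext fun x => by
      change _ = ((L a).mkContinuous ‖a‖ (hL_norm a)).completion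
        (((L b).mkContinuous ‖b‖ (hL_norm b)).completion (x : Completion X))
      rw [hc, hc, hc, hL_mul]
    map_star' := fun a => by
      refine (eq_adjoint_iff _ _).mpr fun x y => ?_
      induction x, y using Completion.induction_on₂ with
      | hp => apply isClosed_eq <;> fun_prop
      | ih x y => rw [hc, hc, Completion.inner_coe, Completion.inner_coe, hL_star] }

open UniformSpace in
lemma completionHom_coe {X : Type*} [SeminormedAddCommGroup X] [InnerProductSpace ℂ X]
    (L : A →ₗ[ℂ] X →ₗ[ℂ] X)
    (hL_mul : ∀ a b x, L (a * b) x = L a (L b x))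
    (hL_star : ∀ a x y, ⟪L (star a) x, y⟫_ℂ = ⟪x, L a y⟫_ℂ)
    (hL_norm : ∀ a x, ‖L a x‖ ≤ ‖a‖ * ‖x‖) (a : A) (x : X) :
    completionHom L hL_mul hL_star hL_norm a (x : Completion X) = ((L a x : X) : Completion X) :=
  ContinuousLinearMap.completion_apply_coe ((L a).mkContinuous ‖a‖ (hL_norm a)) x

open UniformSpace in
/-- The dilation, given its semi-inner product version: `L` is the action of `A` on `X`, `T i` will
become `Vᵢ*`, and `e i a ξ` will become `Φ(a) Vᵢ ξ`. The operators `Vᵢ` are defined as the adjoints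
of the extensions of the `T i`, so there is no need for a unit of `A` to define them. -/
lemma stinespring_of_pre {X : Type (max u v)} [SeminormedAddCommGroup X] [InnerProductSpace ℂ X]
    (L : A →ₗ[ℂ] X →ₗ[ℂ] X) (T : Fin n → X →ₗ[ℂ] H) (e : Fin n → A → H → X)
    (hL_mul : ∀ a b x, L (a * b) x = L a (L b x))
    (hL_star : ∀ a x y, ⟪L (star a) x, y⟫_ℂ = ⟪x, L a y⟫_ℂ)
    (hL_norm : ∀ a x, ‖L a x‖ ≤ ‖a‖ * ‖x‖)
    (hT : ∀ i x, T i x ∈ closure ((fun u => T i (L u x)) '' Metric.closedBall (0 : A) 1))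
    (hTe : ∀ i j a ξ, T i (e j a ξ) = ρ i j a ξ)
    (hLe : ∀ i a b ξ, L a (e i b ξ) = e i (a * b) ξ)
    (he : ∀ i a ξ x, ⟪e i a ξ, x⟫_ℂ = ⟪ξ, T i (L (star a) x)⟫_ℂ)
    (hspan : Submodule.span ℂ {x : X | ∃ a ξ i, x = e i a ξ} = ⊤) :
    Nonempty (StinespringData ρ) := by
  have hT_norm := norm_rowMap_le_of_pre ρ (fun a x => L a x) (fun i x => T i x) e hT hTe hLe he
  let Tc : Fin n → X →L[ℂ] H := fun i => (T i).mkContinuous _ (hT_norm i)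
  have hTc : ∀ i x, Tc i x = T i x := fun a x => rfl
  let Φ : A →⋆ₙₐ[ℂ] (Completion X →L[ℂ] Completion X) := completionHom L hL_mul hL_star hL_norm
  have hΦ : ∀ a (x : X), Φ a (x : Completion X) = ((L a x : X) : Completion X) :=
    completionHom_coe L hL_mul hL_star hL_norm
  let V : Fin n → H →L[ℂ] Completion X := fun i => adjoint (Tc i).fromCompletion
  have hV : ∀ i (x : X), adjoint (V i) (x : Completion X) = T i x := fun i x => by
    simp [V, hTc]
  have hΦV : ∀ a i ξ, Φ a (V i ξ) = ((e i a ξ : X) : Completion X) := by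
    intro a i ξ
    -- It suffices to pair with `y ∈ X`, where `⟪Φ(a) Vᵢ ξ, y⟫ = ⟪ξ, T i (L a* y)⟫`.
    refine ext_inner_right ℂ fun y => ?_
    induction y using Completion.induction_on with
    | hp => apply isClosed_eq <;> fun_prop
    | ih y =>
      rw [← adjoint_inner_right, ← star_eq_adjoint, ← map_star, hΦ, ← adjoint_inner_right, hV,
        Completion.inner_coe, he]
  refine ⟨{ K := Completion X, Φ := Φ, V := V, isRep := ⟨?_, fun i j a => ?_, ?_⟩ }⟩
  · exact AddMonoidHomClass.continuous_of_bound Φ 1 fun a => by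
      simpa using NonUnitalStarAlgHom.norm_apply_le Φ a
  · ext ξ
    simp [hΦV, hV, hTe]
  · simp only [hΦV]
    have hset : {x : Completion X | ∃ (a : A) (ξ : H) (i : Fin n),
          x = ((e i a ξ : X) : Completion X)} =
        (Completion.toComplL : X →L[ℂ] Completion X).toLinearMap ''
          {x : X | ∃ a ξ i, x = e i a ξ} := by
      ext x
      constructor
      · rintro ⟨a, ξ, i, rfl⟩
        exact ⟨_, ⟨a, ξ, i, rfl⟩, rfl⟩
      · rintro ⟨_, ⟨a, ξ, i, rfl⟩, rfl⟩
        exact ⟨a, ξ, i, rfl⟩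
    rw [hset, Submodule.span_image, hspan, Submodule.map_top]
    exact Completion.denseRange_coe

/-! ### The dilation -/

/-- Every completely `n`-positive linear map `ρ : A → L(H)` admits a Stinespring
representation: a representation `Φ_ρ` of `A` on a Hilbert space `H_ρ` together with
`V_{ρ,1}, …, V_{ρ,n} ∈ L(H, H_ρ)` such that `ρ_ij(a) = V_{ρ,i}* Φ_ρ(a) V_{ρ,j}` and
the vectors `Φ_ρ(a) V_{ρ,i} ξ` span a dense subspace of `H_ρ`. -/
theorem statement1 {n : ℕ} (ρ : Fin n → Fin n → (A →L[ℂ] (H →L[ℂ] H)))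
    (hρ : IsCnP ρ) : Nonempty (StinespringData ρ) := by
  let : SeminormedAddCommGroup (H →₀ (Fin n → A)) :=
    InnerProductSpace.Core.toSeminormedAddCommGroup (c := formCore ρ hρ)
  let : InnerProductSpace ℂ (H →₀ (Fin n → A)) := InnerProductSpace.ofCore (formCore ρ hρ)
  have hinner : ∀ f g : H →₀ (Fin n → A), ⟪f, g⟫_ℂ = form ρ f g := fun _ _ => rfl
  refine stinespring_of_pre ρ
    { toFun := fun a => amp (LinearMap.mulLeft ℂ a)
      map_add' := fun a b => LinearMap.ext fun f => by
        rw [mulLeft_add', amp_add_left, LinearMap.add_apply]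
      map_smul' := fun c a => LinearMap.ext fun f => by
        rw [mulLeft_smul', amp_smul_left, RingHom.id_apply, LinearMap.smul_apply] }
    (rowMap ρ) (fun i a ξ => Finsupp.single ξ (Pi.single i a)) ?_ ?_ ?_ ?_ ?_ ?_ ?_ span_single
  · intro a b f
    simp [amp_amp, ← LinearMap.mulLeft_mul]
  · intro a f g
    exact form_amp_comm ρ a f g
  · intro a f
    refine abs_le_of_sq_le_sq' ?_ (by positivity) |>.2
    rw [mul_pow, ← inner_self_eq_norm_sq (𝕜 := ℂ) f, ← inner_self_eq_norm_sq (𝕜 := ℂ)]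
    exact form_mulLeft_le ρ hρ a f
  · exact rowMap_mem_closure ρ
  · intro i j a ξ
    rw [rowMap_single, Finset.sum_eq_single j]
    · simp
    · intro k _ hk
      simp [Pi.single_eq_of_ne hk]
    · simp
  · intro i a b ξ
    ext η k
    change amp (LinearMap.mulLeft ℂ a) _ η k = _
    rw [amp_apply]
    by_cases hη : η = ξ
    · subst hη
      by_cases hk : k = i
      · subst hk
        simp
      · simp [hk]
    · simp [hη]
  · intro i a ξ f
    rw [hinner, form_single_left, Finset.sum_eq_single i]
    · simp
    · intro k _ hk
      have h0 : amp (0 : A →ₗ[ℂ] A) f = 0 := by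
        ext
        simp [amp_apply]
      simp [Pi.single_eq_of_ne hk, h0]
    · simp
end
end

section
/- Let A be a C*-algebra, H a complex Hilbert space, and ρ = [ρ_ij] a completely n-positive linear map from A to L(H). If (Φ, K, V₁, …, V_n) and (Φ′, K′, V₁′, …, V_n′) are two Stinespring representations of ρ, then there is a unitary operator U : K → K′ such that U Φ(a) = Φ′(a) U for all a ∈ A and U V_i = V_i′ for all i ∈ {1, …, n}. -/
/-!
A Stinespring representation is determined by the Gram matrix of its generating vectors
`Φ a (V i ξ)`: since `Φ` is a `*`-homomorphism,
`⟪Φ a (V i ξ), Φ b (V j η)⟫ = ⟪ξ, ρ i j (a⋆ b) η⟫`, which depends on `ρ` only. Two families with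
dense span and equal Gram matrices are related by a unitary
(`exists_linearIsometryEquiv_of_inner_eq`), so there is a unitary `U` with
`U (Φ a (V i ξ)) = Φ' a (V' i ξ)`. It intertwines `Φ` and `Φ'` by multiplicativity on the
generating vectors. As `A` need not have a unit, and the representations need not be unital, the
relation `U (V i ξ) = V' i ξ` is not obtained by setting `a = 1`; instead both sides have the same
inner products with the vectors `Φ' b (V' j η)`, because
`⟪Φ b (V j η), V i ξ⟫ = ⟪η, ρ j i (b⋆) ξ⟫` again depends on `ρ` only.
-/

noncomputable section

open ContinuousLinearMap

universe u v

variable {A : Type u} [NonUnitalCStarAlgebra A]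
variable {H : Type v} [NormedAddCommGroup H] [InnerProductSpace ℂ H] [CompleteSpace H]

/-- Two families of vectors with dense span in Hilbert spaces and with the same Gram matrix are
carried one onto the other by a unitary: the linear combinations of either family with given
coefficients have the same norm. -/
theorem exists_linearIsometryEquiv_of_inner_eq {ι E F : Type*}
    [NormedAddCommGroup E] [InnerProductSpace ℂ E] [CompleteSpace E]
    [NormedAddCommGroup F] [InnerProductSpace ℂ F] [CompleteSpace F]
    (f : ι → E) (g : ι → F)
    (hf : Dense (Submodule.span ℂ (Set.range f) : Set E))
    (hg : Dense (Submodule.span ℂ (Set.range g) : Set F))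
    (hfg : ∀ i j, inner ℂ (f i) (f j) = inner ℂ (g i) (g j)) :
    ∃ U : E ≃ₗᵢ[ℂ] F, ∀ i, U (f i) = g i := by
  have hdf : DenseRange (Finsupp.linearCombination ℂ f) := by
    rwa [← Finsupp.range_linearCombination, LinearMap.coe_range] at hf
  have hdg : DenseRange (Finsupp.linearCombination ℂ g) := by
    rwa [← Finsupp.range_linearCombination, LinearMap.coe_range] at hg
  have hnorm (x : ι →₀ ℂ) :
      ‖Finsupp.linearCombination ℂ g (LinearEquiv.refl ℂ (ι →₀ ℂ) x)‖ =
        ‖Finsupp.linearCombination ℂ f x‖ := by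
    rw [LinearEquiv.refl_apply, @norm_eq_sqrt_re_inner ℂ, @norm_eq_sqrt_re_inner ℂ]
    simp only [Finsupp.linearCombination_apply, Finsupp.sum_inner, Finsupp.inner_sum,
      inner_smul_left, inner_smul_right, hfg]
  refine ⟨(LinearEquiv.refl ℂ (ι →₀ ℂ)).extendOfIsometry _ _ hdf hdg hnorm, fun i => ?_⟩
  simpa using LinearEquiv.extendOfIsometry_eq (LinearEquiv.refl ℂ (ι →₀ ℂ)) _ _ hdf hdg hnorm
    (Finsupp.single i 1)

namespace IsStinespringRep

variable {n : ℕ} {ρ : Fin n → Fin n → (A →L[ℂ] (H →L[ℂ] H))}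
  {K : Type*} [NormedAddCommGroup K] [InnerProductSpace ℂ K] [CompleteSpace K]
  {Φ : A →⋆ₙₐ[ℂ] (K →L[ℂ] K)} {V : Fin n → (H →L[ℂ] K)}

/-- The inner products of `V j η` itself with the generating vectors are determined by `ρ`; this
replaces evaluation at a unit of `A`. -/
theorem inner_left (h : IsStinespringRep ρ Φ V) (a : A) (i j : Fin n) (ξ η : H) :
    inner ℂ (Φ a (V i ξ)) (V j η) = inner ℂ ξ (ρ i j (star a) η) := by
  rw [h.2.1, comp_apply, comp_apply, adjoint_inner_right, map_star, star_eq_adjoint,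
    adjoint_inner_right]

/-- The Gram matrix of the generating vectors is determined by `ρ`. -/
theorem inner_gen (h : IsStinespringRep ρ Φ V) (a b : A) (i j : Fin n) (ξ η : H) :
    inner ℂ (Φ a (V i ξ)) (Φ b (V j η)) = inner ℂ ξ (ρ i j (star a * b) η) := by
  rw [h.2.1, comp_apply, comp_apply, adjoint_inner_right, map_mul, map_star, star_eq_adjoint,
    ContinuousLinearMap.mul_def, comp_apply, adjoint_inner_right]

theorem dense_span (h : IsStinespringRep ρ Φ V) :
    Dense (Submodule.span ℂ
      (Set.range fun p : A × H × Fin n => Φ p.1 (V p.2.2 p.2.1)) : Set K) := by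
  convert! h.2.2 using 3
  ext x
  simp [eq_comm]

end IsStinespringRep

/-- The Stinespring representation of a completely `n`-positive map is unique up
to unitary equivalence. -/
theorem statement2 {n : ℕ} (ρ : Fin n → Fin n → (A →L[ℂ] (H →L[ℂ] H)))
    (hρ : IsCnP ρ)
    {K : Type*} [NormedAddCommGroup K] [InnerProductSpace ℂ K] [CompleteSpace K]
    {K' : Type*} [NormedAddCommGroup K'] [InnerProductSpace ℂ K'] [CompleteSpace K']
    (Φ : A →⋆ₙₐ[ℂ] (K →L[ℂ] K)) (V : Fin n → (H →L[ℂ] K))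
    (Φ' : A →⋆ₙₐ[ℂ] (K' →L[ℂ] K')) (V' : Fin n → (H →L[ℂ] K'))
    (h : IsStinespringRep ρ Φ V) (h' : IsStinespringRep ρ Φ' V') :
    ∃ U : K ≃ₗᵢ[ℂ] K',
      (∀ (a : A) (x : K), U (Φ a x) = Φ' a (U x)) ∧
      (∀ (i : Fin n) (ξ : H), U (V i ξ) = V' i ξ) := by
  obtain ⟨U, hU⟩ := exists_linearIsometryEquiv_of_inner_eq _ _ h.dense_span h'.dense_span
    fun p q => (h.inner_gen p.1 q.1 p.2.2 q.2.2 p.2.1 q.2.1).trans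
      (h'.inner_gen p.1 q.1 p.2.2 q.2.2 p.2.1 q.2.1).symm
  replace hU (a : A) (i : Fin n) (ξ : H) : U (Φ a (V i ξ)) = Φ' a (V' i ξ) := hU (a, ξ, i)
  refine ⟨U, fun a x => ?_, fun i ξ => ?_⟩
  · have hmaps : (U.toContinuousLinearEquiv : K →L[ℂ] K').comp (Φ a) =
        (Φ' a).comp (U.toContinuousLinearEquiv : K →L[ℂ] K') := by
      refine ContinuousLinearMap.ext_on h.dense_span ?_
      rintro _ ⟨⟨b, ξ, i⟩, rfl⟩
      have hab := hU (a * b) i ξ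
      rw [map_mul, map_mul, ContinuousLinearMap.mul_def, ContinuousLinearMap.mul_def, comp_apply,
        comp_apply, ← hU b] at hab
      exact hab
    exact DFunLike.congr_fun hmaps x
  -- Two vectors agree once they have the same inner products with the generators of `K'`.
  · have hinner : innerSL ℂ (U (V i ξ)) = innerSL ℂ (V' i ξ) := by
      refine ContinuousLinearMap.ext_on h'.dense_span ?_
      rintro _ ⟨⟨b, η, j⟩, rfl⟩
      dsimp only
      rw [innerSL_apply_apply, innerSL_apply_apply, ← inner_conj_symm,
        ← inner_conj_symm (V' i ξ), h'.inner_left, ← hU, U.inner_map_map, h.inner_left]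
    exact innerSL_inj.mp hinner
end
end

section
/- Let A be a C*-algebra, H a complex Hilbert space, and let ρ_11 and ρ_22 be completely positive linear maps from A to L(H) that are disjoint, i.e., their Stinespring representations Φ_{ρ_11} on H_{ρ_11} and Φ_{ρ_22} on H_{ρ_22} admit no nonzero bounded operator W : H_{ρ_11} → H_{ρ_22} with W Φ_{ρ_11}(a) = Φ_{ρ_22}(a) W for all a ∈ A. If ρ_12 and ρ_21 are continuous linear maps from A to L(H) such that the 2×2 matrix ρ = [ρ_ij] is a completely 2-positive linear map from A to L(H), then ρ_12 = 0 and ρ_21 = 0. -/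
/-!
Write `T₁ f = ∑ Φ₁(a) V₁ f(a)` and `T₂ g = ∑ Φ₂(a) V₂ g(a)` for finitely supported `f, g : A →₀ H`;
both maps have dense range. Let `B(f, g) = ∑ ⟨ρ₂₁(c* b) f(b), g(c)⟩`.

Applying complete positivity to the blocks whose four corners all equal `a_k* a_l`
(`exists_block`) shows that `ρ₁₂(b* c) = ρ₂₁(c* b)*` (`adjoint_offdiag`) and that
`‖T₁ f‖² + ‖T₂ g‖² + 2 Re B(f, g) ≥ 0` (`quadratic_nonneg`). Rescaling `f` gives
`|B(f, g)| ≤ ‖T₁ f‖ ‖T₂ g‖` (`norm_form_le`), so `B(f, g) = ⟨W T₁ f, T₂ g⟩` for a bounded operator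
`W : K₁ → K₂` (`exists_operator`). Since `c* (a b) = (a* c)* b`, the operator `W` intertwines `Φ₁`
and `Φ₂`, and disjointness forces `W = 0`. Hence `ρ₂₁` and `ρ₁₂` vanish on all products `c* b`, and
these span `A` (`eq_zero_of_star_mul`).
-/

noncomputable section

open ContinuousLinearMap

universe u v

variable {A : Type u} [NonUnitalCStarAlgebra A]
variable {H : Type v} [NormedAddCommGroup H] [InnerProductSpace ℂ H] [CompleteSpace H]

/-- `(Φ, K, V)` is a Stinespring representation of the completely positive map
`ρ₀ : A → L(H)`. -/
def IsStinespringRep1 (ρ₀ : A →L[ℂ] (H →L[ℂ] H))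
    {K : Type*} [NormedAddCommGroup K] [InnerProductSpace ℂ K] [CompleteSpace K]
    (Φ : A →⋆ₙₐ[ℂ] (K →L[ℂ] K)) (V : H →L[ℂ] K) : Prop :=
  Continuous (⇑Φ) ∧
  (∀ a : A, ρ₀ a = (adjoint V).comp ((Φ a).comp V)) ∧
  Dense ((Submodule.span ℂ
    {x : K | ∃ (a : A) (ξ : H), x = Φ a (V ξ)} : Submodule ℂ K) : Set K)


/-! ### Finitely supported functions, representation vectors and the form of a map -/

/-- The vector `∑ₐ Φ(a) V (f a)`, for a finitely supported `f : A →₀ H`. -/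
def repVec {K : Type*} [NormedAddCommGroup K] [InnerProductSpace ℂ K] [CompleteSpace K]
    (Φ : A →⋆ₙₐ[ℂ] (K →L[ℂ] K)) (V : H →L[ℂ] K) : (A →₀ H) →ₗ[ℂ] K :=
  Finsupp.lsum ℂ fun a => ((Φ a).comp V).toLinearMap

/-- The sesquilinear form `(f, g) ↦ ∑_{b, c} ⟨ρ(c* b) f(b), g(c)⟩` on `A →₀ H`. -/
def rhoForm (ρ : A →L[ℂ] (H →L[ℂ] H)) : (A →₀ H) →ₗ⋆[ℂ] (A →₀ H) →ₗ[ℂ] ℂ :=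
  LinearMap.mk₂'ₛₗ (starRingEnd ℂ) (RingHom.id ℂ)
    (fun f g => f.sum fun b x => g.sum fun c y => inner ℂ (ρ (star c * b) x) y)
    (by
      intro f₁ f₂ g
      refine Finsupp.sum_add_index' (by simp) ?_
      intro b x₁ x₂
      simp [Finsupp.sum_add])
    (by
      intro t f g
      rw [Finsupp.sum_smul_index' (by simp), smul_eq_mul]
      simp [Finsupp.sum, Finset.sum_mul, mul_comm])
    (by
      intro f g₁ g₂
      rw [← Finsupp.sum_add]
      refine Finsupp.sum_congr fun b _ => ?_
      exact Finsupp.sum_add_index' (by simp) (by simp))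
    (by
      intro t f g
      have h : ∀ b x, ((t • g).sum fun c y => inner ℂ (ρ (star c * b) x) y) =
          t * g.sum fun c y => inner ℂ (ρ (star c * b) x) y := by
        intro b x
        rw [Finsupp.sum_smul_index' (by simp)]
        simp [Finsupp.sum, Finset.mul_sum]
      simp only [h]
      simp only [Finsupp.sum, Finset.mul_sum, RingHom.id_apply, smul_eq_mul])

lemma rhoForm_apply_of_subset (ρ : A →L[ℂ] (H →L[ℂ] H)) (f g : A →₀ H) (s : Finset A)
    (hf : f.support ⊆ s) (hg : g.support ⊆ s) :
    rhoForm ρ f g = ∑ b ∈ s, ∑ c ∈ s, inner ℂ (ρ (star c * b) (f b)) (g c) := by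
  change (f.sum fun b x => g.sum fun c y => inner ℂ (ρ (star c * b) x) y) = _
  rw [Finsupp.sum_of_support_subset f hf _ (by simp)]
  refine Finset.sum_congr rfl fun b _ => ?_
  rw [Finsupp.sum_of_support_subset g hg _ (by simp)]

lemma rhoForm_single_single (ρ : A →L[ℂ] (H →L[ℂ] H)) (b c : A) (x y : H) :
    rhoForm ρ (Finsupp.single b x) (Finsupp.single c y) = inner ℂ (ρ (star c * b) x) y := by
  change ((Finsupp.single b x).sum fun b x => (Finsupp.single c y).sum fun c y =>
    inner ℂ (ρ (star c * b) x) y) = _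
  rw [Finsupp.sum_single_index (by simp), Finsupp.sum_single_index (by simp)]

section rep

variable {K : Type*} [NormedAddCommGroup K] [InnerProductSpace ℂ K] [CompleteSpace K]
  {Φ : A →⋆ₙₐ[ℂ] (K →L[ℂ] K)} {V : H →L[ℂ] K} {ρ₀ : A →L[ℂ] (H →L[ℂ] H)}

lemma repVec_single (a : A) (x : H) : repVec Φ V (Finsupp.single a x) = Φ a (V x) := by
  simp [repVec]

lemma denseRange_repVec (h : IsStinespringRep1 ρ₀ Φ V) : DenseRange (repVec Φ V) := by
  refine h.2.2.mono ?_
  rw [← LinearMap.coe_range, SetLike.coe_subset_coe, Submodule.span_le]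
  rintro _ ⟨a, ξ, rfl⟩
  exact ⟨Finsupp.single a ξ, repVec_single a ξ⟩

lemma inner_rep (h : IsStinespringRep1 ρ₀ Φ V) (b c : A) (x y : H) :
    inner ℂ (ρ₀ (star c * b) x) y = inner ℂ (Φ b (V x)) (Φ c (V y)) := by
  rw [h.2.1, map_mul, map_star, star_eq_adjoint]
  simp [adjoint_inner_left]

lemma inner_repVec (h : IsStinespringRep1 ρ₀ Φ V) (f : A →₀ H) (s : Finset A)
    (hf : f.support ⊆ s) :
    inner ℂ (repVec Φ V f) (repVec Φ V f) =
      ∑ b ∈ s, ∑ c ∈ s, inner ℂ (ρ₀ (star c * b) (f b)) (f c) := by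
  have hT : repVec Φ V f = ∑ a ∈ s, Φ a (V (f a)) := by
    simp only [repVec, Finsupp.lsum_apply]
    rw [Finsupp.sum_of_support_subset f hf _ (by simp)]
    simp
  rw [hT, sum_inner]
  refine Finset.sum_congr rfl fun b _ => ?_
  rw [inner_sum]
  exact Finset.sum_congr rfl fun c _ => (inner_rep h b c _ _).symm

end rep

/-! ### Positivity of the block form -/

/-- The quadratic form of an operator block matrix of the form `z* z` is nonnegative. -/
lemma re_quadratic_nonneg {m : ℕ} (z : Matrix (Fin m) (Fin m) (Matrix (Fin 2) (Fin 2) (H →L[ℂ] H)))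
    (v : Fin m → Fin 2 → H) :
    0 ≤ (∑ k, ∑ l, ∑ i, ∑ j, inner ℂ (v k i) ((star z * z) k l i j (v l j))).re := by
  have key : (∑ k, ∑ l, ∑ i, ∑ j, inner ℂ (v k i) ((star z * z) k l i j (v l j))) =
      ∑ p, ∑ r, inner ℂ (∑ k, ∑ i, z p k r i (v k i)) (∑ l, ∑ j, z p l r j (v l j)) := by
    have entry : ∀ k l i j, inner ℂ (v k i) ((star z * z) k l i j (v l j)) =
        ∑ p, ∑ r, inner ℂ (z p k r i (v k i)) (z p l r j (v l j)) := by
      intro k l i j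
      have hS : ∀ (S T : H →L[ℂ] H) (x y : H),
          inner ℂ x ((star S * T) y) = inner ℂ (S x) (T y) := fun S T x y => by
        rw [star_eq_adjoint]
        exact adjoint_inner_right S _ _
      simp only [Matrix.mul_apply, Matrix.sum_apply, Matrix.star_apply, _root_.sum_apply,
        inner_sum, hS]
    simp only [entry, sum_inner]
    simp only [inner_sum]
    let e : Fin m × Fin m × Fin 2 × Fin 2 × Fin m × Fin 2 ≃
        Fin m × Fin 2 × Fin m × Fin 2 × Fin m × Fin 2 :=
      { toFun := fun ⟨k, l, i, j, p, r⟩ => ⟨p, r, k, i, l, j⟩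
        invFun := fun ⟨p, r, k, i, l, j⟩ => ⟨k, l, i, j, p, r⟩
        left_inv := fun _ => rfl
        right_inv := fun _ => rfl }
    have := Fintype.sum_equiv e
      (fun ⟨k, l, i, j, p, r⟩ => inner ℂ (z p k r i (v k i)) (z p l r j (v l j)))
      (fun ⟨p, r, k, i, l, j⟩ => inner ℂ (z p k r i (v k i)) (z p l r j (v l j)))
      (fun _ => rfl)
    simpa only [Fintype.sum_prod_type] using this
  rw [key, Complex.re_sum]
  refine Finset.sum_nonneg fun p _ => ?_
  rw [Complex.re_sum]
  exact Finset.sum_nonneg fun r _ => inner_self_nonneg (𝕜 := ℂ)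

/-- The element of `Mₘ(M₂(A))` whose `(k, l)` block has all four entries `a_k* a_l` is of the form
`y* y`, where only the first row of `y` is nonzero; so its image `[ρ_ij(a_k* a_l)]` is also
of the form `z* z`. -/
lemma exists_block {ρ₁₁ ρ₁₂ ρ₂₁ ρ₂₂ : A →L[ℂ] (H →L[ℂ] H)}
    (hρ : IsCnP ![![ρ₁₁, ρ₁₂], ![ρ₂₁, ρ₂₂]]) {m : ℕ} (a : Fin m → A) :
    ∃ z : Matrix (Fin m) (Fin m) (Matrix (Fin 2) (Fin 2) (H →L[ℂ] H)), ∀ k l i j,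
      (star z * z) k l i j = (![![ρ₁₁, ρ₁₂], ![ρ₂₁, ρ₂₂]] i j) (star (a k) * a l) := by
  cases m with
  | zero => exact ⟨0, fun k => k.elim0⟩
  | succ m =>
    obtain ⟨y, hy⟩ : ∃ y : Matrix (Fin (m + 1)) (Fin (m + 1)) (Matrix (Fin 2) (Fin 2) A),
        ∀ p k r j, y p k r j = if p = 0 then if r = 0 then a k else 0 else 0 :=
      ⟨fun p k r _ => if p = 0 then if r = 0 then a k else 0 else 0, fun _ _ _ _ => rfl⟩
    obtain ⟨z, hz⟩ := hρ (m + 1) (star y * y) ⟨y, rfl⟩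
    refine ⟨z, fun k l i j => ?_⟩
    rw [← hz, Matrix.map_apply]
    change (![![ρ₁₁, ρ₁₂], ![ρ₂₁, ρ₂₂]] i j) ((star y * y) k l i j) = _
    congr 1
    simp only [Matrix.mul_apply, Matrix.sum_apply, Matrix.star_apply, hy]
    rw [Finset.sum_eq_single 0 (by simp +contextual) (by simp),
      Finset.sum_eq_single 0 (by simp +contextual) (by simp)]
    simp

/-- The off-diagonal maps are adjoint to each other, on products. -/
lemma adjoint_offdiag {ρ₁₁ ρ₁₂ ρ₂₁ ρ₂₂ : A →L[ℂ] (H →L[ℂ] H)}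
    (hρ : IsCnP ![![ρ₁₁, ρ₁₂], ![ρ₂₁, ρ₂₂]]) (b c : A) :
    ρ₁₂ (star b * c) = adjoint (ρ₂₁ (star c * b)) := by
  obtain ⟨z, hz⟩ := exists_block hρ ![b, c]
  have h1 := hz 0 1 0 1
  have h2 := hz 1 0 1 0
  have h3 : star (star z * z) 0 1 0 1 = (star z * z) 0 1 0 1 := by
    rw [(IsSelfAdjoint.star_mul_self z).star_eq]
  rw [Matrix.star_apply, Matrix.star_apply, h1, h2, star_eq_adjoint] at h3
  simpa using h3.symm

/-- Nonnegativity of the `2 × 2` block form on `(f, g)`: the diagonal maps contribute the squared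
norms, and the two off-diagonal maps contribute complex conjugate terms. -/
lemma quadratic_nonneg {ρ₁₁ ρ₁₂ ρ₂₁ ρ₂₂ : A →L[ℂ] (H →L[ℂ] H)}
    (hρ : IsCnP ![![ρ₁₁, ρ₁₂], ![ρ₂₁, ρ₂₂]])
    {K₁ : Type*} [NormedAddCommGroup K₁] [InnerProductSpace ℂ K₁] [CompleteSpace K₁]
    {K₂ : Type*} [NormedAddCommGroup K₂] [InnerProductSpace ℂ K₂] [CompleteSpace K₂]
    {Φ₁ : A →⋆ₙₐ[ℂ] (K₁ →L[ℂ] K₁)} {V₁ : H →L[ℂ] K₁}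
    {Φ₂ : A →⋆ₙₐ[ℂ] (K₂ →L[ℂ] K₂)} {V₂ : H →L[ℂ] K₂}
    (h₁ : IsStinespringRep1 ρ₁₁ Φ₁ V₁) (h₂ : IsStinespringRep1 ρ₂₂ Φ₂ V₂) (f g : A →₀ H) :
    0 ≤ ‖repVec Φ₁ V₁ f‖ ^ 2 + ‖repVec Φ₂ V₂ g‖ ^ 2 + 2 * (rhoForm ρ₂₁ f g).re := by
  classical
  set s : Finset A := f.support ∪ g.support with hs
  have hf : f.support ⊆ s := Finset.subset_union_left
  have hg : g.support ⊆ s := Finset.subset_union_right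
  let e := s.equivFin.symm
  have hsum : ∀ F : A → A → ℂ, ∑ b ∈ s, ∑ c ∈ s, F b c = ∑ k, ∑ l, F (e k) (e l) := by
    intro F
    rw [← Finset.sum_coe_sort s, ← Equiv.sum_comp e]
    refine Finset.sum_congr rfl fun k _ => ?_
    rw [← Finset.sum_coe_sort s, ← Equiv.sum_comp e]
  obtain ⟨z, hz⟩ := exists_block hρ (fun k => (e k : A))
  have hq := re_quadratic_nonneg z (fun k => ![f (e k), g (e k)])
  have n1 : ((‖repVec Φ₁ V₁ f‖ : ℝ) ^ 2) =
      (∑ k, ∑ l, inner ℂ (ρ₁₁ (star (e l : A) * e k) (f (e k))) (f (e l))).re := by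
    rw [← hsum fun b c => inner ℂ (ρ₁₁ (star c * b) (f b)) (f c), ← inner_repVec h₁ f s hf]
    exact (inner_self_eq_norm_sq (𝕜 := ℂ) _).symm
  have n2 : ((‖repVec Φ₂ V₂ g‖ : ℝ) ^ 2) =
      (∑ k, ∑ l, inner ℂ (ρ₂₂ (star (e l : A) * e k) (g (e k))) (g (e l))).re := by
    rw [← hsum fun b c => inner ℂ (ρ₂₂ (star c * b) (g b)) (g c), ← inner_repVec h₂ g s hg]
    exact (inner_self_eq_norm_sq (𝕜 := ℂ) _).symm
  have n3 : (rhoForm ρ₂₁ f g).re =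
      (∑ k, ∑ l, inner ℂ (ρ₂₁ (star (e l : A) * e k) (f (e k))) (g (e l))).re := by
    rw [← hsum fun b c => inner ℂ (ρ₂₁ (star c * b) (f b)) (g c),
      rhoForm_apply_of_subset _ _ _ s hf hg]
  -- Exchanging the two indices and conjugating does not change the real part.
  have hswap : ∀ (ρ : A →L[ℂ] (H →L[ℂ] H)) (x y : A → H),
      (∑ k, ∑ l, inner ℂ (ρ (star (e l : A) * e k) (x (e k))) (y (e l))).re =
        (∑ k, ∑ l, inner ℂ (y (e k)) (ρ (star (e k : A) * e l) (x (e l)))).re := by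
    intro ρ x y
    rw [Finset.sum_comm]
    simp only [Complex.re_sum]
    exact Finset.sum_congr rfl fun k _ => Finset.sum_congr rfl fun l _ =>
      inner_re_symm (𝕜 := ℂ) _ _
  have hadj : ∀ k l, inner ℂ (f (e k)) (ρ₁₂ (star (e k : A) * e l) (g (e l))) =
      inner ℂ (ρ₂₁ (star (e l : A) * e k) (f (e k))) (g (e l)) := by
    intro k l
    rw [adjoint_offdiag hρ, adjoint_inner_right]
  simp only [hz, Fin.sum_univ_two] at hq
  simp [hadj, Finset.sum_add_distrib] at hq
  have n3' := n3
  rw [hswap] at n1 n2 n3'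
  simp only [Complex.re_sum] at n1 n2 n3 n3'
  linarith

/-! ### From a bounded form to an operator -/

/-- Rescaling `f` turns nonnegativity of the quadratic form into a Cauchy–Schwarz bound. -/
lemma norm_form_le {X Y K₁ K₂ : Type*} [AddCommGroup X] [Module ℂ X] [AddCommGroup Y] [Module ℂ Y]
    [NormedAddCommGroup K₁] [NormedSpace ℂ K₁] [NormedAddCommGroup K₂] [NormedSpace ℂ K₂]
    (T₁ : X →ₗ[ℂ] K₁) (T₂ : Y →ₗ[ℂ] K₂) (B : X →ₗ⋆[ℂ] Y →ₗ[ℂ] ℂ)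
    (h : ∀ f g, 0 ≤ ‖T₁ f‖ ^ 2 + ‖T₂ g‖ ^ 2 + 2 * (B f g).re) (f : X) (g : Y) :
    ‖B f g‖ ≤ ‖T₁ f‖ * ‖T₂ g‖ := by
  obtain ⟨u, hu, huB⟩ : ∃ u : ℂ, ‖u‖ = 1 ∧ (starRingEnd ℂ u) * B f g = ‖B f g‖ := by
    obtain ⟨c, hc, h'⟩ := RCLike.exists_norm_eq_mul_self (B f g)
    exact ⟨starRingEnd ℂ c, by simpa using hc, by simpa using h'.symm⟩
  have hd := discrim_le_zero (a := ‖T₁ f‖ ^ 2) (b := 2 * ‖B f g‖) (c := ‖T₂ g‖ ^ 2) fun t => by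
    have := h (((t : ℂ) * u) • f) g
    rw [map_smul T₁, B.map_smulₛₗ, LinearMap.smul_apply, map_mul, smul_eq_mul, mul_assoc, huB,
      Complex.conj_ofReal, ← Complex.ofReal_mul, Complex.ofReal_re, norm_smul, norm_mul,
      hu, Complex.norm_real, mul_one, mul_pow, Real.norm_eq_abs, sq_abs] at this
    linarith
  rw [discrim] at hd
  refine abs_le_of_sq_le_sq' ?_ (by positivity) |>.2
  nlinarith

/-- A sesquilinear form bounded by `‖T₁ x‖ ‖T₂ y‖`, with `T₁` and `T₂` of dense range, is given by
a bounded operator between the target Hilbert spaces. -/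
lemma exists_operator {X Y K₁ K₂ : Type*} [AddCommGroup X] [Module ℂ X]
    [AddCommGroup Y] [Module ℂ Y]
    [NormedAddCommGroup K₁] [InnerProductSpace ℂ K₁] [CompleteSpace K₁]
    [NormedAddCommGroup K₂] [InnerProductSpace ℂ K₂] [CompleteSpace K₂]
    (T₁ : X →ₗ[ℂ] K₁) (T₂ : Y →ₗ[ℂ] K₂) (hT₁ : DenseRange T₁) (hT₂ : DenseRange T₂)
    (B : X →ₗ⋆[ℂ] Y →ₗ[ℂ] ℂ) (h : ∀ x y, ‖B x y‖ ≤ ‖T₁ x‖ * ‖T₂ y‖) :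
    ∃ W : K₁ →L[ℂ] K₂, ∀ x y, inner ℂ (W (T₁ x)) (T₂ y) = B x y := by
  let w : X → K₂ := fun x => (InnerProductSpace.toDual ℂ K₂).symm ((B x).extendOfNorm T₂)
  have hw : ∀ x y, inner ℂ (w x) (T₂ y) = B x y := by
    intro x y
    rw [InnerProductSpace.toDual_symm_apply, LinearMap.extendOfNorm_eq hT₂ ⟨_, h x⟩]
  have hwle : ∀ x, ‖w x‖ ≤ 1 * ‖T₁ x‖ := by
    intro x
    rw [LinearIsometryEquiv.norm_map, one_mul]
    exact LinearMap.opNorm_extendOfNorm_le hT₂ (norm_nonneg _) (h x)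
  have huniq : ∀ p q : K₂, (∀ y, inner ℂ p (T₂ y) = inner ℂ q (T₂ y)) → p = q := by
    intro p q hpq
    refine ext_inner_right ℂ fun v => ?_
    exact congrFun (hT₂.equalizer (by fun_prop) (by fun_prop) (funext hpq)) v
  let wl : X →ₗ[ℂ] K₂ :=
    { toFun := w
      map_add' := fun x₁ x₂ => huniq _ _ fun y => by simp [hw]
      map_smul' := fun t x => huniq _ _ fun y => by simp [hw, mul_comm] }
  refine ⟨wl.extendOfNorm T₁, fun x y => ?_⟩
  rw [LinearMap.extendOfNorm_eq hT₁ ⟨1, hwle⟩]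
  exact hw x y

/-! ### Products span the algebra -/

/-- Products `c* b` span a C⋆-algebra, because positive elements `b* b` do. -/
lemma eq_zero_of_star_mul {E : Type*} [NormedAddCommGroup E] [NormedSpace ℂ E] (φ : A →L[ℂ] E)
    (h : ∀ b c, φ (star c * b) = 0) : φ = 0 := by
  let _ := CStarAlgebra.spectralOrder A
  let _ := CStarAlgebra.spectralOrderedRing A
  ext a
  have ha : a ∈ Submodule.span ℂ {a : A | 0 ≤ a} := by
    rw [CStarAlgebra.span_nonneg]; trivial
  induction ha using Submodule.span_induction with
  | mem x hx =>
    obtain ⟨b, rfl⟩ := CStarAlgebra.nonneg_iff_eq_star_mul_self.mp (Set.mem_ofPred.mp hx)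
    simpa using h b b
  | zero => simp
  | add x y _ _ hx hy => simpa using by rw [hx, hy]; simp
  | smul t x _ hx => rw [map_smul, hx]; simp

/-! ### Disjointness forces the off-diagonal maps to vanish -/

/-- If the completely positive maps `ρ₁₁` and `ρ₂₂` are disjoint (their Stinespring
representations admit no nonzero intertwining operator), then the only continuous
linear maps `ρ₁₂, ρ₂₁` making `[ρ_ij]` completely `2`-positive are zero. -/
theorem statement5 (ρ₁₁ ρ₂₂ : A →L[ℂ] (H →L[ℂ] H))
    (hcp₁ : IsCP (⇑ρ₁₁)) (hcp₂ : IsCP (⇑ρ₂₂))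
    {K₁ : Type*} [NormedAddCommGroup K₁] [InnerProductSpace ℂ K₁] [CompleteSpace K₁]
    {K₂ : Type*} [NormedAddCommGroup K₂] [InnerProductSpace ℂ K₂] [CompleteSpace K₂]
    (Φ₁ : A →⋆ₙₐ[ℂ] (K₁ →L[ℂ] K₁)) (V₁ : H →L[ℂ] K₁)
    (Φ₂ : A →⋆ₙₐ[ℂ] (K₂ →L[ℂ] K₂)) (V₂ : H →L[ℂ] K₂)
    (h₁ : IsStinespringRep1 ρ₁₁ Φ₁ V₁) (h₂ : IsStinespringRep1 ρ₂₂ Φ₂ V₂)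
    (hdisj : ∀ W : K₁ →L[ℂ] K₂, (∀ a : A, W.comp (Φ₁ a) = (Φ₂ a).comp W) → W = 0)
    (ρ₁₂ ρ₂₁ : A →L[ℂ] (H →L[ℂ] H))
    (hρ : IsCnP ![![ρ₁₁, ρ₁₂], ![ρ₂₁, ρ₂₂]]) :
    ρ₁₂ = 0 ∧ ρ₂₁ = 0 := by
  -- The Schwarz bound for the form of `ρ₂₁` gives an operator `W` with
  -- `⟨W Φ₁(b) V₁ ξ, Φ₂(c) V₂ η⟩ = ⟨ρ₂₁(c* b) ξ, η⟩`.
  obtain ⟨W, hW⟩ := exists_operator (repVec Φ₁ V₁) (repVec Φ₂ V₂) (denseRange_repVec h₁)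
    (denseRange_repVec h₂) (rhoForm ρ₂₁) (norm_form_le _ _ _ (quadratic_nonneg hρ h₁ h₂))
  have hW' : ∀ (b c : A) (x y : H),
      inner ℂ (W (Φ₁ b (V₁ x))) (Φ₂ c (V₂ y)) = inner ℂ (ρ₂₁ (star c * b) x) y := by
    intro b c x y
    rw [← rhoForm_single_single, ← hW, repVec_single, repVec_single]
  have hW0 : W = 0 := by
    refine hdisj W fun a => ?_
    refine ContinuousLinearMap.ext_on h₁.2.2 ?_
    rintro _ ⟨b, x, rfl⟩
    refine ext_inner_right ℂ fun v => ?_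
    refine congrFun (Continuous.ext_on (denseRange_repVec h₂)
      (f := fun v => inner ℂ ((W.comp (Φ₁ a)) (Φ₁ b (V₁ x))) v)
      (g := fun v => inner ℂ (((Φ₂ a).comp W) (Φ₁ b (V₁ x))) v)
      (by fun_prop) (by fun_prop) ?_) v
    rintro _ ⟨g, rfl⟩
    induction g using Finsupp.induction_linear with
    | zero => simp
    | add g₁ g₂ h₁ h₂ => simp only [map_add, inner_add_right] at *; rw [h₁, h₂]
    | single c y =>
      have e1 : Φ₁ a (Φ₁ b (V₁ x)) = Φ₁ (a * b) (V₁ x) := by rw [map_mul]; rfl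
      have e2 : adjoint (Φ₂ a) (Φ₂ c (V₂ y)) = Φ₂ (star a * c) (V₂ y) := by
        rw [map_mul, map_star, star_eq_adjoint]; rfl
      rw [repVec_single]
      change inner ℂ (W (Φ₁ a (Φ₁ b (V₁ x)))) (Φ₂ c (V₂ y)) =
        inner ℂ (Φ₂ a (W (Φ₁ b (V₁ x)))) (Φ₂ c (V₂ y))
      rw [e1, ← adjoint_inner_right (Φ₂ a), e2, hW', hW', star_mul, star_star, mul_assoc]
  have h21 : ∀ b c, ρ₂₁ (star c * b) = 0 := by
    intro b c
    ext x
    refine ext_inner_right ℂ fun y => ?_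
    rw [← hW', hW0]
    simp
  refine ⟨eq_zero_of_star_mul _ fun b c => ?_, eq_zero_of_star_mul _ h21⟩
  rw [adjoint_offdiag hρ, h21, map_zero]
end
end

section
/- Let A be a C*-algebra, H a complex Hilbert space, and let ρ_11 and ρ_22 be completely positive linear maps from A to L(H) that are not disjoint, i.e., there exists a nonzero bounded operator W : H_{ρ_11} → H_{ρ_22} with W Φ_{ρ_11}(a) = Φ_{ρ_22}(a) W for all a ∈ A, where Φ_{ρ_ii} is a Stinespring representation of ρ_ii on H_{ρ_ii}. Then there exist nonzero continuous linear maps ρ_12 and ρ_21 from A to L(H) such that the 2×2 matrix ρ = [ρ_ij] is a completely 2-positive linear map from A to L(H). -/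
/-! Let `W ≠ 0` intertwine `Φ₁` and `Φ₂`, rescaled so that `‖W‖ ≤ 1`. The off-diagonal entries are
`ρ₂₁ a = V₂* W Φ₁(a) V₁` and `ρ₁₂ a = V₁* W* Φ₂(a) V₂`.

They are nonzero: if `ρ₂₁ = 0`, then evaluating at `b* a` and using the intertwining relation
gives `⟪Φ₂(b) V₂ η, W Φ₁(a) V₁ ξ⟫ = 0` for all `a, b, ξ, η`, and both families of vectors are total,
so `W = 0`. Since `W*` intertwines in the other direction, `ρ₁₂ ≠ 0` follows in the same way.

Complete positivity: for `x = y* y` in `M_m(M₂(A))`, the quadratic form of the image of `x` at a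
family `ξ` in `H` is a sum, over the rows of `y`, of terms
`⟪u, u⟫ + ⟪u, W* v⟫ + ⟪v, W u⟫ + ⟪v, v⟫` with `u = ∑ₖ Φ₁(yₖ₀) V₁ ξₖ₀` and
`v = ∑ₖ Φ₂(yₖ₁) V₂ ξₖ₁`, each of which is nonnegative because `‖W‖ ≤ 1`
(`contraction_form_nonneg`). A matrix over `L(H)` with nonnegative quadratic form is of the form
`z* z`, by taking a square root of the corresponding operator on `⨁ H`
(`exists_star_mul_self_of_form_nonneg`). -/

noncomputable section

open ContinuousLinearMap

universe u v

variable {A : Type u} [NonUnitalCStarAlgebra A]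
variable {H : Type v} [NormedAddCommGroup H] [InnerProductSpace ℂ H] [CompleteSpace H]

open scoped ComplexOrder

lemma exists_eq_star_mul_self {G : Type*} [NormedAddCommGroup G] [InnerProductSpace ℂ G]
    [CompleteSpace G] {T : G →L[ℂ] G} (hT : T.IsPositive) : ∃ S : G →L[ℂ] G, T = star S * S :=
  CStarAlgebra.nonneg_iff_eq_star_mul_self.mp ((ContinuousLinearMap.nonneg_iff_isPositive T).mpr hT)

/-- An operator matrix with nonnegative quadratic form is of the form `z* z`: the entries of `z`
are those of a square root of the operator it induces on the Hilbert sum of copies of `H`. -/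
lemma exists_star_mul_self_of_form_nonneg {ι : Type*} [Fintype ι] [DecidableEq ι]
    (X : ι → ι → (H →L[ℂ] H))
    (hX : ∀ ξ : ι → H, 0 ≤ ∑ p, ∑ q, inner ℂ (ξ p) (X p q (ξ q))) :
    ∃ z : ι → ι → (H →L[ℂ] H), ∀ p q, X p q = ∑ r, star (z r p) * z r q := by
  let E : ι → (H →L[ℂ] PiLp 2 (fun _ : ι => H)) := fun p =>
    ((PiLp.continuousLinearEquiv 2 ℂ (fun _ : ι => H)).symm :
      (ι → H) →L[ℂ] PiLp 2 (fun _ : ι => H)).comp (ContinuousLinearMap.single ℂ (fun _ => H) p)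
  let P : ι → (PiLp 2 (fun _ : ι => H) →L[ℂ] H) := fun p => PiLp.proj 2 (fun _ : ι => H) p
  have hPE : ∀ p q (ξ : H), P p (E q ξ) = if p = q then ξ else 0 := by
    intro p q ξ
    by_cases h : p = q
    · subst h; simp [P, E]
    · simp [P, E, h]
  have hEP : ∀ x, ∑ r, E r (P r x) = x := by
    intro x
    ext p
    have : (∑ r, E r (P r x)) p = ∑ r, P p (E r (P r x)) := by
      change P p (∑ r, E r (P r x)) = _
      rw [map_sum]
    rw [this]
    simp [hPE]
    rfl
  have hadjE : ∀ p x (ξ : H), inner ℂ (E p ξ) x = inner ℂ ξ (P p x) := by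
    intro p x ξ
    have h : ∀ r, (E p ξ) r = if r = p then ξ else 0 := fun r => hPE r p ξ
    rw [PiLp.inner_apply, Finset.sum_eq_single p]
    · rw [h]; simp [P]
    · intro r _ hr; rw [h]; simp [hr]
    · simp
  let T : PiLp 2 (fun _ : ι => H) →L[ℂ] PiLp 2 (fun _ : ι => H) :=
    ∑ p, ∑ q, (E p).comp ((X p q).comp (P q))
  have hTpos : T.IsPositive := by
    rw [ContinuousLinearMap.isPositive_iff_complex]
    intro x
    have h0 := hX (fun p => P p x)
    have h1 : inner ℂ (T x) x = star (∑ p, ∑ q, inner ℂ (P p x) (X p q (P q x))) := by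
      simp [T, hadjE]
    rw [h1]
    generalize (∑ p, ∑ q, inner ℂ (P p x) (X p q (P q x)) : ℂ) = c at h0
    rw [Complex.le_def] at h0
    refine ⟨?_, ?_⟩
    · apply Complex.ext <;> simp [← h0.2]
    · simpa using h0.1
  obtain ⟨S, hS⟩ := exists_eq_star_mul_self hTpos
  have hXT : ∀ p q ξ, X p q ξ = P p (T (E q ξ)) := by
    intro p q ξ
    simp [T, hPE, apply_ite]
  refine ⟨fun p q => (P p).comp (S.comp (E q)), fun p q => ?_⟩
  ext ξ
  refine ext_inner_left ℂ fun η => ?_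
  rw [hXT, ← hadjE, hS]
  simp only [sum_apply, inner_sum, mul_apply_eq_comp,
    ContinuousLinearMap.star_eq_adjoint, ContinuousLinearMap.adjoint_inner_right,
    ContinuousLinearMap.comp_apply]
  simp_rw [← hadjE]
  rw [PiLp.inner_apply]
  simp_rw [hadjE]
  rfl

/-- The block operator `[[1, W*], [W, 1]]` is positive when `W` is a contraction. -/
lemma contraction_form_nonneg
    {K₁ : Type*} [NormedAddCommGroup K₁] [InnerProductSpace ℂ K₁] [CompleteSpace K₁]
    {K₂ : Type*} [NormedAddCommGroup K₂] [InnerProductSpace ℂ K₂] [CompleteSpace K₂]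
    (W : K₁ →L[ℂ] K₂) (hW : ‖W‖ ≤ 1) (u : K₁) (v : K₂) :
    (0 : ℂ) ≤ (inner ℂ u u + inner ℂ u (adjoint W v)) + (inner ℂ v (W u) + inner ℂ v v) := by
  have hWu : ‖W u‖ ≤ ‖u‖ := by
    simpa using W.le_of_opNorm_le hW u
  rw [ContinuousLinearMap.adjoint_inner_right, ← inner_conj_symm (W u) v,
    inner_self_eq_norm_sq_to_K, inner_self_eq_norm_sq_to_K]
  have hre : -(‖v‖ * ‖W u‖) ≤ (inner ℂ v (W u)).re :=
    (abs_le.mp ((Complex.abs_re_le_norm _).trans (norm_inner_le_norm v (W u)))).1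
  generalize (inner ℂ v (W u) : ℂ) = c at hre
  rw [Complex.le_def]
  constructor
  · simp [← Complex.ofReal_pow]
    nlinarith [sq_nonneg (‖v‖ - ‖u‖), norm_nonneg v, norm_nonneg u,
      mul_le_mul_of_nonneg_left hWu (norm_nonneg v)]
  · simp [← Complex.ofReal_pow]

/-- The continuous linear map `a ↦ L Φ(a) R`. -/
def sandwich {K : Type*} [NormedAddCommGroup K] [InnerProductSpace ℂ K] [CompleteSpace K]
    (Φ : A →⋆ₙₐ[ℂ] (K →L[ℂ] K)) (hΦ : Continuous (⇑Φ)) (L : K →L[ℂ] H) (R : H →L[ℂ] K) :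
    A →L[ℂ] (H →L[ℂ] H) where
  toFun a := L.comp ((Φ a).comp R)
  map_add' a b := by ext; simp
  map_smul' c a := by ext; simp
  cont := by fun_prop

lemma inner_map_star_mul {K : Type*} [NormedAddCommGroup K] [InnerProductSpace ℂ K]
    [CompleteSpace K] (Φ : A →⋆ₙₐ[ℂ] (K →L[ℂ] K)) (a b : A) (x y : K) :
    inner ℂ x (Φ (star a * b) y) = inner ℂ (Φ a x) (Φ b y) := by
  rw [map_mul, map_star, mul_apply_eq_comp, ContinuousLinearMap.star_eq_adjoint,
    ContinuousLinearMap.adjoint_inner_right]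

/-- A nonzero intertwiner between Stinespring representations yields a nonzero off-diagonal map,
because both families `Φ₁(a) V₁ ξ` and `Φ₂(b) V₂ η` are total. -/
lemma sandwich_ne_zero {ρ₁ ρ₂ : A →L[ℂ] (H →L[ℂ] H)}
    {K₁ : Type*} [NormedAddCommGroup K₁] [InnerProductSpace ℂ K₁] [CompleteSpace K₁]
    {K₂ : Type*} [NormedAddCommGroup K₂] [InnerProductSpace ℂ K₂] [CompleteSpace K₂]
    {Φ₁ : A →⋆ₙₐ[ℂ] (K₁ →L[ℂ] K₁)} {V₁ : H →L[ℂ] K₁}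
    {Φ₂ : A →⋆ₙₐ[ℂ] (K₂ →L[ℂ] K₂)} {V₂ : H →L[ℂ] K₂}
    (h₁ : IsStinespringRep1 ρ₁ Φ₁ V₁) (h₂ : IsStinespringRep1 ρ₂ Φ₂ V₂)
    (W : K₁ →L[ℂ] K₂) (hW : W ≠ 0)
    (hWint : ∀ (a : A) x, W (Φ₁ a x) = Φ₂ a (W x)) :
    sandwich Φ₁ h₁.1 ((adjoint V₂).comp W) V₁ ≠ 0 := by
  intro h0
  apply hW
  have key : ∀ a b ξ η, inner ℂ (Φ₂ b (V₂ η)) (W (Φ₁ a (V₁ ξ))) = 0 := by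
    intro a b ξ η
    have h : (sandwich Φ₁ h₁.1 ((adjoint V₂).comp W) V₁) (star b * a) ξ = 0 := by
      rw [h0]; rfl
    change adjoint V₂ (W (Φ₁ (star b * a) (V₁ ξ))) = 0 at h
    rw [hWint, ← inner_map_star_mul, ← hWint, ← ContinuousLinearMap.adjoint_inner_right,
      h, inner_zero_right]
  refine ContinuousLinearMap.ext_on (h₁.2.2) ?_
  rintro _ ⟨a, ξ, rfl⟩
  refine h₂.2.2.eq_zero_of_inner_right ℂ fun v hv => ?_
  induction hv using Submodule.span_induction with
  | mem x hx => obtain ⟨b, η, rfl⟩ := hx; exact key a b ξ η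
  | zero => simp
  | add x y _ _ hx hy => rw [inner_add_left, hx, hy, add_zero]
  | smul c x _ hx => rw [inner_smul_left, hx, mul_zero]

/-- The quadratic form of the image of `y* y` splits over the rows `t` of `y` (seen as a
`2m × 2m` matrix over `A`) into the forms of `contraction_form_nonneg`. -/
lemma isCnP_of_contraction (ρ₁₁ ρ₂₂ : A →L[ℂ] (H →L[ℂ] H))
    {K₁ : Type*} [NormedAddCommGroup K₁] [InnerProductSpace ℂ K₁] [CompleteSpace K₁]
    {K₂ : Type*} [NormedAddCommGroup K₂] [InnerProductSpace ℂ K₂] [CompleteSpace K₂]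
    (Φ₁ : A →⋆ₙₐ[ℂ] (K₁ →L[ℂ] K₁)) (V₁ : H →L[ℂ] K₁)
    (Φ₂ : A →⋆ₙₐ[ℂ] (K₂ →L[ℂ] K₂)) (V₂ : H →L[ℂ] K₂)
    (h₁ : IsStinespringRep1 ρ₁₁ Φ₁ V₁) (h₂ : IsStinespringRep1 ρ₂₂ Φ₂ V₂)
    (W : K₁ →L[ℂ] K₂) (hW : ‖W‖ ≤ 1)
    (hWint : ∀ (a : A) x, W (Φ₁ a x) = Φ₂ a (W x))
    (hWint' : ∀ (a : A) x, adjoint W (Φ₂ a x) = Φ₁ a (adjoint W x)) :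
    IsCnP ![![ρ₁₁, sandwich Φ₂ h₂.1 ((adjoint V₁).comp (adjoint W)) V₂],
      ![sandwich Φ₁ h₁.1 ((adjoint V₂).comp W) V₁, ρ₂₂]] := by
  set ρ : Fin 2 → Fin 2 → (A →L[ℂ] (H →L[ℂ] H)) :=
    ![![ρ₁₁, sandwich Φ₂ h₂.1 ((adjoint V₁).comp (adjoint W)) V₂],
      ![sandwich Φ₁ h₁.1 ((adjoint V₂).comp W) V₁, ρ₂₂]] with hρ
  have e11 : ∀ a b ξ η, inner ℂ ξ (ρ 0 0 (star a * b) η)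
      = inner ℂ (Φ₁ a (V₁ ξ)) (Φ₁ b (V₁ η)) := by
    intro a b ξ η
    change inner ℂ ξ (ρ₁₁ _ η) = _
    rw [h₁.2.1, ContinuousLinearMap.comp_apply, ContinuousLinearMap.adjoint_inner_right,
      ContinuousLinearMap.comp_apply, inner_map_star_mul]
  have e22 : ∀ a b ξ η, inner ℂ ξ (ρ 1 1 (star a * b) η)
      = inner ℂ (Φ₂ a (V₂ ξ)) (Φ₂ b (V₂ η)) := by
    intro a b ξ η
    change inner ℂ ξ (ρ₂₂ _ η) = _
    rw [h₂.2.1, ContinuousLinearMap.comp_apply, ContinuousLinearMap.adjoint_inner_right,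
      ContinuousLinearMap.comp_apply, inner_map_star_mul]
  have e12 : ∀ a b ξ η, inner ℂ ξ (ρ 0 1 (star a * b) η)
      = inner ℂ (Φ₁ a (V₁ ξ)) (adjoint W (Φ₂ b (V₂ η))) := by
    intro a b ξ η
    change inner ℂ ξ (adjoint V₁ (adjoint W (Φ₂ _ (V₂ η)))) = _
    rw [ContinuousLinearMap.adjoint_inner_right, hWint', inner_map_star_mul, ← hWint']
  have e21 : ∀ a b ξ η, inner ℂ ξ (ρ 1 0 (star a * b) η)
      = inner ℂ (Φ₂ a (V₂ ξ)) (W (Φ₁ b (V₁ η))) := by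
    intro a b ξ η
    change inner ℂ ξ (adjoint V₂ (W (Φ₁ _ (V₁ η)))) = _
    rw [ContinuousLinearMap.adjoint_inner_right, hWint, inner_map_star_mul, ← hWint]
  clear_value ρ
  rintro m _ ⟨y, rfl⟩
  -- The entries of `M_m(M₂(L(H)))` are indexed by pairs, so that it becomes `M_{2m}(L(H))`.
  obtain ⟨z, hz⟩ := exists_star_mul_self_of_form_nonneg
    (fun p q : Fin m × Fin 2 => ρ p.2 q.2 ((star y * y) p.1 q.1 p.2 q.2)) (by
      intro ξ
      have hxe : ∀ k l i j, (star y * y) k l i j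
          = ∑ t : Fin m × Fin 2, star (y t.1 k t.2 i) * y t.1 l t.2 j := by
        intro k l i j
        simp [Matrix.mul_apply, Matrix.star_apply, Matrix.sum_apply, Fintype.sum_prod_type]
      let u : Fin m × Fin 2 → K₁ := fun t => ∑ k, Φ₁ (y t.1 k t.2 0) (V₁ (ξ (k, 0)))
      let v : Fin m × Fin 2 → K₂ := fun t => ∑ k, Φ₂ (y t.1 k t.2 1) (V₂ (ξ (k, 1)))
      have hsum : ∑ p : Fin m × Fin 2, ∑ q : Fin m × Fin 2,
          inner ℂ (ξ p) (ρ p.2 q.2 ((star y * y) p.1 q.1 p.2 q.2) (ξ q))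
          = ∑ t, ((inner ℂ (u t) (u t) + inner ℂ (u t) (adjoint W (v t)))
            + (inner ℂ (v t) (W (u t)) + inner ℂ (v t) (v t))) := by
        calc _ = ∑ p : Fin m × Fin 2, ∑ q : Fin m × Fin 2, ∑ t : Fin m × Fin 2,
              inner ℂ (ξ p) (ρ p.2 q.2 (star (y t.1 p.1 t.2 p.2) * y t.1 q.1 t.2 q.2) (ξ q)) := by
              simp only [hxe, map_sum, sum_apply, inner_sum]
          _ = ∑ t : Fin m × Fin 2, ∑ p : Fin m × Fin 2, ∑ q : Fin m × Fin 2,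
              inner ℂ (ξ p) (ρ p.2 q.2 (star (y t.1 p.1 t.2 p.2) * y t.1 q.1 t.2 q.2) (ξ q)) := by
              exact (Finset.sum_congr rfl fun p _ => Finset.sum_comm).trans Finset.sum_comm
          _ = _ := by
              refine Finset.sum_congr rfl fun t _ => ?_
              simp only [Fintype.sum_prod_type (α₁ := Fin m) (α₂ := Fin 2), Fin.sum_univ_two,
                e11, e12, e21, e22, u, v, map_sum, sum_inner]
              simp only [inner_sum, Finset.sum_add_distrib]
      rw [hsum]
      exact Finset.sum_nonneg fun t _ => contraction_form_nonneg W hW _ _)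
  refine ⟨Matrix.of fun k l => Matrix.of fun i j => z (k, i) (l, j), ?_⟩
  ext1 k l
  ext1 i j
  have := hz (k, i) (l, j)
  simp only [Matrix.map_apply, matApply, Matrix.of_apply]
  rw [this]
  simp [Matrix.mul_apply, Matrix.star_apply, Matrix.sum_apply, Fintype.sum_prod_type]

/-- If the completely positive maps `ρ₁₁` and `ρ₂₂` are not disjoint (there is a
nonzero intertwining operator between their Stinespring representations), then
there exist nonzero continuous linear maps `ρ₁₂, ρ₂₁` making `[ρ_ij]` a completely
`2`-positive linear map. -/
theorem statement6 (ρ₁₁ ρ₂₂ : A →L[ℂ] (H →L[ℂ] H))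
    (hcp₁ : IsCP (⇑ρ₁₁)) (hcp₂ : IsCP (⇑ρ₂₂))
    {K₁ : Type*} [NormedAddCommGroup K₁] [InnerProductSpace ℂ K₁] [CompleteSpace K₁]
    {K₂ : Type*} [NormedAddCommGroup K₂] [InnerProductSpace ℂ K₂] [CompleteSpace K₂]
    (Φ₁ : A →⋆ₙₐ[ℂ] (K₁ →L[ℂ] K₁)) (V₁ : H →L[ℂ] K₁)
    (Φ₂ : A →⋆ₙₐ[ℂ] (K₂ →L[ℂ] K₂)) (V₂ : H →L[ℂ] K₂)
    (h₁ : IsStinespringRep1 ρ₁₁ Φ₁ V₁) (h₂ : IsStinespringRep1 ρ₂₂ Φ₂ V₂)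
    (W : K₁ →L[ℂ] K₂) (hW : W ≠ 0)
    (hWint : ∀ a : A, W.comp (Φ₁ a) = (Φ₂ a).comp W) :
    ∃ ρ₁₂ ρ₂₁ : A →L[ℂ] (H →L[ℂ] H), ρ₁₂ ≠ 0 ∧ ρ₂₁ ≠ 0 ∧
      IsCnP ![![ρ₁₁, ρ₁₂], ![ρ₂₁, ρ₂₂]] := by
  -- Rescaling makes the intertwiner a contraction.
  obtain ⟨W', hW'0, hW'1, hcomm⟩ : ∃ W' : K₁ →L[ℂ] K₂, W' ≠ 0 ∧ ‖W'‖ ≤ 1 ∧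
      ∀ (a : A) x, W' (Φ₁ a x) = Φ₂ a (W' x) := by
    have hn : ‖W‖ ≠ 0 := norm_ne_zero_iff.mpr hW
    refine ⟨((‖W‖⁻¹ : ℝ) : ℂ) • W, smul_ne_zero (by simpa using hn) hW, ?_, fun a x => ?_⟩
    · rw [norm_smul]
      simp [hn]
    · have h := DFunLike.congr_fun (hWint a) x
      simp only [ContinuousLinearMap.comp_apply] at h
      simp only [smul_apply, map_smul, h]
  have hcomm' : ∀ (a : A) x, adjoint W' (Φ₂ a x) = Φ₁ a (adjoint W' x) := by
    intro a x
    refine ext_inner_left ℂ fun w => ?_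
    rw [ContinuousLinearMap.adjoint_inner_right, ← ContinuousLinearMap.adjoint_inner_left,
      ← ContinuousLinearMap.star_eq_adjoint, ← map_star, ← hcomm,
      ← ContinuousLinearMap.adjoint_inner_right, map_star, ContinuousLinearMap.star_eq_adjoint,
      ContinuousLinearMap.adjoint_inner_left]
  have hadj0 : adjoint W' ≠ 0 := by
    simpa using hW'0
  exact ⟨_, _, sandwich_ne_zero h₂ h₁ (adjoint W') hadj0 hcomm',
    sandwich_ne_zero h₁ h₂ W' hW'0 hcomm,
    isCnP_of_contraction ρ₁₁ ρ₂₂ Φ₁ V₁ Φ₂ V₂ h₁ h₂ W' hW'1 hcomm hcomm'⟩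
end
end

section
/- Let A be a C*-algebra, H a complex Hilbert space, ρ = [ρ_ij] a completely n-positive linear map from A to L(H), and (Φ_ρ, H_ρ, V_{ρ,1}, …, V_{ρ,n}) a Stinespring representation of ρ. For positive T ∈ Φ_ρ(A)′ let ρ_T denote the completely n-positive map with entries (ρ_T)_ij(a) = V_{ρ,i}* T Φ_ρ(a) V_{ρ,j}. If T₁ and T₂ are positive elements of Φ_ρ(A)′, then T₁ ≤ T₂ (as operators on H_ρ) if and only if ρ_{T₁} ≤ ρ_{T₂}, i.e., ρ_{T₂} − ρ_{T₁} is a completely n-positive linear map. -/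
/-!
For `T` in the commutant of `Φ(A)`, the map `σ = ρ_T` satisfies
`σ_ij(a* b) = (Φ(a) V_i)* T (Φ(b) V_j)`, and `ρ_{T₂} - ρ_{T₁} = ρ_{T₂ - T₁}`. So the theorem says
that a self-adjoint `T` in the commutant is positive iff `ρ_T` is completely `n`-positive.

If `T` is positive, `ρ_T` sends `y* y` to a block matrix of the form `[∑_b W_{b,i}* T W_{b,j}]`,
which is the matrix of a positive operator on a finite direct sum of copies of `H`; the entries of
its square root give the required factorisation (`exists_star_mul_self_of_isPositive`).

Conversely, for `x = ∑ l, Φ(a_l) V_{c_l} ξ_l` the number `⟪T x, x⟫` is a sum of terms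
`⟪σ_{c_k c_l}(a_k* a_l) ξ_l, ξ_k⟫`. Applying complete `n`-positivity to `y* y`, for `y` a single row
containing the `a_l`, exhibits it as a sum of squared norms (`re_inner_sum_nonneg`). Such `x` are
dense in `K`, so `T` is positive.
-/
noncomputable section

open ContinuousLinearMap

universe u v

variable {A : Type u} [NonUnitalCStarAlgebra A]
variable {H : Type v} [NormedAddCommGroup H] [InnerProductSpace ℂ H] [CompleteSpace H]

/-- A block matrix `[∑_b (W b i)* T (W b j)]_{ij}` of operators on `H`, with `T` positive on `K`,
is of the form `Z* Z` with `Z` again a block matrix of operators on `H`. The factor obtained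
directly takes values in `K`, so it is replaced by the positive square root on `⨁_ι H`. -/
theorem exists_star_mul_self_of_isPositive {ι β : Type*} [Fintype ι] [Fintype β]
    {K : Type*} [NormedAddCommGroup K] [InnerProductSpace ℂ K] [CompleteSpace K]
    {T : K →L[ℂ] K} (hT : T.IsPositive) (W : β → ι → (H →L[ℂ] K)) :
    ∃ Z : ι → ι → (H →L[ℂ] H), ∀ i j,
      ∑ b, (adjoint (W b i)).comp (T.comp (W b j)) = ∑ k, star (Z k i) * Z k j := by
  classical
  let E := PiLp 2 (fun _ : ι => H)
  -- The coordinate projections; their adjoints are the coordinate inclusions.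
  let p : ι → (E →L[ℂ] H) := fun i => PiLp.proj 2 (fun _ : ι => H) i
  have hp : ∀ i v, p i v = v i := fun _ _ => rfl
  have hpadj : ∀ i h, adjoint (p i) h = WithLp.toLp 2 (Pi.single i h) := by
    intro i h
    refine ext_inner_right ℂ fun v => ?_
    rw [adjoint_inner_left, PiLp.inner_apply, Finset.sum_eq_single i]
    · simp [hp]
    · intro k _ hk
      simp [hk]
    · simp
  have hsum : ∑ k, (adjoint (p k)).comp (p k) = 1 := by
    refine ContinuousLinearMap.ext fun v => ext_inner_right ℂ fun w => ?_
    simp only [sum_apply, sum_inner, comp_apply, adjoint_inner_left, hp]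
    exact (PiLp.inner_apply v w).symm
  -- The row operator `(W b i)_i` on the direct sum.
  let B : β → (E →L[ℂ] K) := fun b => ∑ i, (W b i).comp (p i)
  have hB : ∀ b i, (B b).comp (adjoint (p i)) = W b i := by
    intro b i
    ext h
    simp only [B, comp_apply, sum_apply, hpadj]
    rw [Finset.sum_eq_single i]
    · simp [hp]
    · intro k _ hk
      simp [hp, hk]
    · simp
  let P : E →L[ℂ] E := ∑ b, (adjoint (B b)).comp (T.comp (B b))
  have hP : 0 ≤ P := by
    refine Finset.sum_nonneg fun b _ => ?_
    rw [nonneg_iff_isPositive]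
    exact hT.adjoint_conj (B b)
  let Q : E →L[ℂ] E := CFC.sqrt P
  have hQQ : Q * Q = P := CFC.sqrt_mul_sqrt_self P hP
  have hQ : adjoint Q = Q := (IsSelfAdjoint.of_nonneg (CFC.sqrt_nonneg P)).star_eq
  refine ⟨fun k i => (p k).comp (Q.comp (adjoint (p i))), fun i j => ?_⟩
  have h1 : ∀ b, (adjoint (W b i)).comp (T.comp (W b j)) =
      (p i).comp (((adjoint (B b)).comp (T.comp (B b))).comp (adjoint (p j))) := by
    intro b
    rw [← hB b i, ← hB b j, adjoint_comp, adjoint_adjoint]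
    rfl
  have h2 : ∀ k, star ((p k).comp (Q.comp (adjoint (p i)))) * (p k).comp (Q.comp (adjoint (p j))) =
      (p i).comp (Q.comp (((adjoint (p k)).comp (p k)).comp (Q.comp (adjoint (p j))))) := by
    intro k
    rw [star_eq_adjoint, adjoint_comp, adjoint_comp, adjoint_adjoint, hQ]
    rfl
  calc ∑ b, (adjoint (W b i)).comp (T.comp (W b j))
      = (p i).comp (P.comp (adjoint (p j))) := by
        simp only [h1, P]
        ext h
        simp [sum_apply, map_sum]
    _ = (p i).comp (Q.comp ((∑ k, (adjoint (p k)).comp (p k)).comp (Q.comp (adjoint (p j))))) := by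
        rw [hsum, ← hQQ]
        rfl
    _ = _ := by
        simp only [h2]
        ext h
        simp [sum_apply, map_sum]

/-- Entry of `star y * y` for a matrix `y` whose entries are themselves matrices. -/
theorem star_mul_self_block_apply {R : Type*} [NonUnitalSemiring R] [StarRing R] {m n : ℕ}
    (y : Matrix (Fin m) (Fin m) (Matrix (Fin n) (Fin n) R)) (k l : Fin m) (i j : Fin n) :
    (star y * y) k l i j = ∑ p, ∑ q, star (y p k q i) * y p l q j := by
  simp [Matrix.mul_apply, Matrix.sum_apply, Matrix.star_apply]

section Commutant

variable {n : ℕ} {K : Type*} [NormedAddCommGroup K] [InnerProductSpace ℂ K] [CompleteSpace K]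
  {Φ : A →⋆ₙₐ[ℂ] (K →L[ℂ] K)} {V : Fin n → (H →L[ℂ] K)} {T : K →L[ℂ] K}
  {σ : Fin n → Fin n → (A →L[ℂ] (H →L[ℂ] H))}

theorem apply_star_mul (hcomm : ∀ a : A, T.comp (Φ a) = (Φ a).comp T)
    (hσ : ∀ i j a, σ i j a = (adjoint (V i)).comp (T.comp ((Φ a).comp (V j))))
    (i j : Fin n) (a b : A) :
    σ i j (star a * b) = (adjoint ((Φ a).comp (V i))).comp (T.comp ((Φ b).comp (V j))) := by
  have h1 : Φ (star a * b) = (adjoint (Φ a)).comp (Φ b) := by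
    rw [map_mul, map_star]
    rfl
  have h2 : T.comp (adjoint (Φ a)) = (adjoint (Φ a)).comp T := by
    have := hcomm (star a)
    rwa [map_star, star_eq_adjoint] at this
  rw [hσ, h1, adjoint_comp]
  ext ξ
  have h3 := DFunLike.congr_fun h2 (Φ b (V j ξ))
  simp only [comp_apply] at h3 ⊢
  rw [h3]

theorem isCnP_of_isPositive (hT : T.IsPositive) (hcomm : ∀ a : A, T.comp (Φ a) = (Φ a).comp T)
    (hσ : ∀ i j a, σ i j a = (adjoint (V i)).comp (T.comp ((Φ a).comp (V j)))) :
    IsCnP σ := by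
  rintro m x ⟨y, rfl⟩
  obtain ⟨Z, hZ⟩ := exists_star_mul_self_of_isPositive (H := H) hT
    (fun (b : Fin m × Fin n) (k : Fin m × Fin n) => (Φ (y b.1 k.1 b.2 k.2)).comp (V k.2))
  refine ⟨Matrix.of fun k l => Matrix.of fun i j => Z (k, i) (l, j), ?_⟩
  ext1 k l
  ext1 i j
  rw [star_mul_self_block_apply]
  have h := hZ (k, i) (l, j)
  simp only [Fintype.sum_prod_type] at h
  simp only [Matrix.of_apply, ← h, Matrix.map_apply, matApply, star_mul_self_block_apply, map_sum,
    apply_star_mul hcomm hσ]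

/-- Complete `n`-positivity makes the quadratic form of `T` nonnegative on finite sums
`∑ l, Φ (a l) (V (c l) (ξ l))`. -/
theorem re_inner_sum_nonneg (hcp : IsCnP σ) (hcomm : ∀ a : A, T.comp (Φ a) = (Φ a).comp T)
    (hσ : ∀ i j a, σ i j a = (adjoint (V i)).comp (T.comp ((Φ a).comp (V j))))
    {m : ℕ} (a : Fin m → A) (c : Fin m → Fin n) (ξ : Fin m → H) :
    0 ≤ (inner ℂ (T (∑ l, Φ (a l) (V (c l) (ξ l)))) (∑ l, Φ (a l) (V (c l) (ξ l)))).re := by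
  rcases Nat.eq_zero_or_pos m with rfl | hm
  · simp
  let p₀ : Fin m := ⟨0, hm⟩
  -- A block matrix with a single nonzero scalar row, carrying `a l` in column `(l, c l)`.
  let y : Matrix (Fin m) (Fin m) (Matrix (Fin n) (Fin n) A) := Matrix.of fun p l =>
    Matrix.of fun q i => if p = p₀ then if q = c p₀ then if i = c l then a l else 0 else 0 else 0
  obtain ⟨z, hz⟩ := hcp m (star y * y) ⟨y, rfl⟩
  have hy : ∀ k l, (star y * y) k l (c k) (c l) = star (a k) * a l := by
    intro k l
    rw [star_mul_self_block_apply, Finset.sum_eq_single p₀, Finset.sum_eq_single (c p₀)]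
    · simp [y]
    · intro q _ hq
      simp [y, hq]
    · simp
    · intro p _ hp
      simp [y, hp]
    · simp
  have hentry : ∀ k l, (adjoint ((Φ (a k)).comp (V (c k)))).comp
      (T.comp ((Φ (a l)).comp (V (c l)))) =
      ∑ p, ∑ q, star (z p k q (c k)) * z p l q (c l) := by
    intro k l
    rw [← star_mul_self_block_apply, ← hz, ← apply_star_mul hcomm hσ, ← hy]
    rfl
  have hterm : ∀ k l, inner ℂ (T (Φ (a l) (V (c l) (ξ l)))) (Φ (a k) (V (c k) (ξ k))) =
      ∑ p, ∑ q, inner ℂ (z p l q (c l) (ξ l)) (z p k q (c k) (ξ k)) := by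
    intro k l
    have h := congrArg (fun S : H →L[ℂ] H => inner ℂ (S (ξ l)) (ξ k)) (hentry k l)
    simpa [sum_apply, sum_inner, star_eq_adjoint, adjoint_inner_left] using h
  have hsum : inner ℂ (T (∑ l, Φ (a l) (V (c l) (ξ l)))) (∑ l, Φ (a l) (V (c l) (ξ l))) =
      ∑ p, ∑ q, inner ℂ (∑ l, z p l q (c l) (ξ l)) (∑ l, z p l q (c l) (ξ l)) := by
    simp only [map_sum, sum_inner, inner_sum, hterm]
    calc _ = _ := Finset.sum_congr rfl fun _ _ => Finset.sum_comm
      _ = _ := Finset.sum_comm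
      _ = _ := Finset.sum_congr rfl fun _ _ => Finset.sum_congr rfl fun _ _ => Finset.sum_comm
      _ = _ := Finset.sum_congr rfl fun _ _ => Finset.sum_comm
  rw [hsum, Complex.re_sum]
  refine Finset.sum_nonneg fun p _ => ?_
  rw [Complex.re_sum]
  exact Finset.sum_nonneg fun q _ => inner_self_nonneg (𝕜 := ℂ)

theorem isPositive_of_isCnP (hsa : T.IsSymmetric) (hcp : IsCnP σ)
    (hcomm : ∀ a : A, T.comp (Φ a) = (Φ a).comp T)
    (hσ : ∀ i j a, σ i j a = (adjoint (V i)).comp (T.comp ((Φ a).comp (V j))))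
    (hdense : Dense ((Submodule.span ℂ
      {x : K | ∃ (a : A) (ξ : H) (i : Fin n), x = Φ a (V i ξ)} : Submodule ℂ K) : Set K)) :
    T.IsPositive := by
  refine ⟨hsa, fun x => ?_⟩
  change 0 ≤ (inner ℂ (T x) x).re
  refine hdense.induction (P := fun x => 0 ≤ (inner ℂ (T x) x).re) (fun x hx => ?_)
    (isClosed_le continuous_const (by fun_prop)) x
  obtain ⟨m, f, g, rfl⟩ := Submodule.mem_span_set'.1 hx
  choose a ξ c h using fun l => (g l).2
  have hx : ∑ l, f l • (g l : K) = ∑ l, Φ (a l) (V (c l) (f l • ξ l)) :=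
    Finset.sum_congr rfl fun l _ => by rw [h l, map_smul, map_smul]
  rw [hx]
  exact re_inner_sum_nonneg hcp hcomm hσ a c fun l => f l • ξ l

end Commutant

/-- For positive `T₁, T₂` in the commutant of `Φ_ρ(A)`, one has `T₁ ≤ T₂` if and
only if `ρ_{T₁} ≤ ρ_{T₂}`. -/
theorem statement9 {n : ℕ} (ρ : Fin n → Fin n → (A →L[ℂ] (H →L[ℂ] H)))
    (hρ : IsCnP ρ)
    {K : Type*} [NormedAddCommGroup K] [InnerProductSpace ℂ K] [CompleteSpace K]
    (Φ : A →⋆ₙₐ[ℂ] (K →L[ℂ] K)) (V : Fin n → (H →L[ℂ] K))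
    (h : IsStinespringRep ρ Φ V)
    (T₁ T₂ : K →L[ℂ] K) (hT₁pos : T₁.IsPositive) (hT₂pos : T₂.IsPositive)
    (hT₁comm : ∀ a : A, T₁.comp (Φ a) = (Φ a).comp T₁)
    (hT₂comm : ∀ a : A, T₂.comp (Φ a) = (Φ a).comp T₂)
    (ρT₁ ρT₂ : Fin n → Fin n → (A →L[ℂ] (H →L[ℂ] H)))
    (hρT₁ : ∀ (i j : Fin n) (a : A), ρT₁ i j a =
      (adjoint (V i)).comp (T₁.comp ((Φ a).comp (V j))))
    (hρT₂ : ∀ (i j : Fin n) (a : A), ρT₂ i j a =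
      (adjoint (V i)).comp (T₂.comp ((Φ a).comp (V j)))) :
    (T₂ - T₁).IsPositive ↔ IsCnP (fun i j => ρT₂ i j - ρT₁ i j) := by
  have hcomm : ∀ a : A, (T₂ - T₁).comp (Φ a) = (Φ a).comp (T₂ - T₁) := fun a => by
    rw [sub_comp, comp_sub, hT₁comm, hT₂comm]
  have hσ : ∀ i j a, (fun i j => ρT₂ i j - ρT₁ i j) i j a =
      (adjoint (V i)).comp ((T₂ - T₁).comp ((Φ a).comp (V j))) := fun i j a => by
    rw [sub_comp, comp_sub, ← hρT₁, ← hρT₂]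
    rfl
  exact ⟨fun hT => isCnP_of_isPositive hT hcomm hσ, fun hcp =>
    isPositive_of_isCnP (hT₂pos.isSymmetric.sub hT₁pos.isSymmetric) hcp hcomm hσ h.2.2⟩
end
end

section
/- Let A be a C*-algebra, H a complex Hilbert space, and let ρ = [ρ_ij] and θ = [θ_ij] be completely n-positive linear maps from A to L(H) with θ ≤ ρ. Let (Φ_ρ, H_ρ, V_{ρ,1}, …, V_{ρ,n}) and (Φ_θ, H_θ, V_{θ,1}, …, V_{θ,n}) be Stinespring representations of ρ and θ respectively. Then there exists a bounded linear operator W : H_ρ → H_θ such that (1) ‖W‖ ≤ 1, (2) W V_{ρ,i} = V_{θ,i} for all i ∈ {1, …, n}, and (3) W Φ_ρ(a) = Φ_θ(a) W for all a ∈ A. -/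
/-!
The operator is determined on the dense subspace spanned by the vectors `Φ a (V i ξ)`, where it
must send `Φ a (V i ξ)` to `Φ' a (V' i ξ)`. That this is well defined and contractive is the
inequality `‖∑ Φ' (a k) (V' (i k) (ξ k))‖ ≤ ‖∑ Φ (a k) (V (i k) (ξ k))‖`: the difference of the
squared norms is `∑ k l, ⟪ξ k, (ρ - θ) (i k) (i l) (star (a k) * a l) (ξ l)⟫`, which is
nonnegative because `ρ - θ` is completely `n`-positive (`IsCnP.re_sum_inner_nonneg`).

The intertwining relation holds on the spanning vectors, hence everywhere by density. As `A` need
not be unital, the relation `W V i = V' i` is obtained from nondegeneracy of `Φ'`: the vector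
`W (V i ξ) - V' i ξ` is killed by every `Φ' a`, hence orthogonal to the dense span of the
vectors `Φ' a (V' j η)`.
-/

noncomputable section

open ContinuousLinearMap

universe u v

variable {A : Type u} [NonUnitalCStarAlgebra A]
variable {H : Type v} [NormedAddCommGroup H] [InnerProductSpace ℂ H] [CompleteSpace H]

/-- Complete `n`-positivity tested on vectors. Every block `(k, l)` of the positive matrix that is
used has all its entries equal to `star (a k) * a l`. -/
theorem IsCnP.re_sum_inner_nonneg {n : ℕ} {σ : Fin n → Fin n → (A →L[ℂ] (H →L[ℂ] H))}
    (hσ : IsCnP σ) {m : ℕ} (a : Fin m → A) (i : Fin m → Fin n) (ξ : Fin m → H) :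
    0 ≤ (∑ k, ∑ l, inner ℂ (ξ k) (σ (i k) (i l) (star (a k) * a l) (ξ l))).re := by
  rcases isEmpty_or_nonempty (Fin m) with hm | ⟨⟨k₀⟩⟩
  · simp
  -- `y` has a single nonzero scalar row, `(k₀, i k₀)`, whose `(l, j)` entry is `a l`.
  let y : Matrix (Fin m) (Fin m) (Matrix (Fin n) (Fin n) A) := Matrix.of fun p l =>
    Matrix.of fun q _ => if p = k₀ then if q = i k₀ then a l else 0 else 0
  obtain ⟨z, hz⟩ := hσ m (star y * y) ⟨y, rfl⟩
  have key : ∀ k l, σ (i k) (i l) (star (a k) * a l) =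
      ∑ p, ∑ q, star (z p k q (i k)) * z p l q (i l) := by
    intro k l
    have h1 := congrFun (congrFun (congrFun (congrFun hz k) l) (i k)) (i l)
    have h2 : (star y * y) k l (i k) (i l) = star (a k) * a l := by
      simp [Matrix.mul_apply, Matrix.sum_apply, Matrix.star_apply, y]
    simp only [Matrix.map_apply, matApply, Matrix.of_apply, h2] at h1
    rw [h1]
    simp [Matrix.mul_apply, Matrix.sum_apply, Matrix.star_apply]
  have h3 : ∑ k, ∑ l, inner ℂ (ξ k) (σ (i k) (i l) (star (a k) * a l) (ξ l)) =
      ∑ p, ∑ q, inner ℂ (∑ k, z p k q (i k) (ξ k)) (∑ l, z p l q (i l) (ξ l)) := by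
    simp only [key, sum_inner, inner_sum, sum_apply,
      mul_apply_eq_comp, star_eq_adjoint, adjoint_inner_right]
    rw [Finset.sum_congr rfl fun k _ => Finset.sum_comm, Finset.sum_comm]
    refine Finset.sum_congr rfl fun p _ => ?_
    rw [Finset.sum_congr rfl fun k _ => Finset.sum_comm, Finset.sum_comm]
    exact Finset.sum_congr rfl fun q _ => Finset.sum_comm
  rw [h3, Complex.re_sum]
  refine Finset.sum_nonneg fun p _ => ?_
  rw [Complex.re_sum]
  exact Finset.sum_nonneg fun q _ => inner_self_nonneg (𝕜 := ℂ)

theorem IsStinespringRep.inner_eq {n : ℕ} {ρ : Fin n → Fin n → (A →L[ℂ] (H →L[ℂ] H))}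
    {K : Type*} [NormedAddCommGroup K] [InnerProductSpace ℂ K] [CompleteSpace K]
    {Φ : A →⋆ₙₐ[ℂ] (K →L[ℂ] K)} {V : Fin n → (H →L[ℂ] K)} (h : IsStinespringRep ρ Φ V)
    (a b : A) (i j : Fin n) (ξ η : H) :
    inner ℂ (Φ a (V i ξ)) (Φ b (V j η)) = inner ℂ ξ (ρ i j (star a * b) η) := by
  rw [h.2.1, map_mul, map_star, star_eq_adjoint]
  simp [adjoint_inner_right]

theorem IsStinespringRep.normSq_sum {n : ℕ} {ρ : Fin n → Fin n → (A →L[ℂ] (H →L[ℂ] H))}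
    {K : Type*} [NormedAddCommGroup K] [InnerProductSpace ℂ K] [CompleteSpace K]
    {Φ : A →⋆ₙₐ[ℂ] (K →L[ℂ] K)} {V : Fin n → (H →L[ℂ] K)} (h : IsStinespringRep ρ Φ V)
    {m : ℕ} (a : Fin m → A) (i : Fin m → Fin n) (ξ : Fin m → H) :
    ‖∑ k, Φ (a k) (V (i k) (ξ k))‖ ^ 2 =
      (∑ k, ∑ l, inner ℂ (ξ k) (ρ (i k) (i l) (star (a k) * a l) (ξ l))).re := by
  rw [← inner_self_eq_norm_sq (𝕜 := ℂ), sum_inner]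
  simp only [inner_sum, h.inner_eq]
  rfl

/-- The linear map from formal combinations of triples `(a, ξ, i)` to `K` that sends the generator
`(a, ξ, i)` to `Φ a (V i ξ)`. -/
def stinespringMap {n : ℕ} {K : Type*} [NormedAddCommGroup K] [InnerProductSpace ℂ K]
    [CompleteSpace K] (Φ : A →⋆ₙₐ[ℂ] (K →L[ℂ] K)) (V : Fin n → (H →L[ℂ] K)) :
    (A × H × Fin n →₀ ℂ) →ₗ[ℂ] K :=
  Finsupp.linearCombination ℂ fun s => Φ s.1 (V s.2.2 s.2.1)

theorem stinespringMap_single {n : ℕ} {K : Type*} [NormedAddCommGroup K] [InnerProductSpace ℂ K]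
    [CompleteSpace K] (Φ : A →⋆ₙₐ[ℂ] (K →L[ℂ] K)) (V : Fin n → (H →L[ℂ] K))
    (a : A) (ξ : H) (i : Fin n) :
    stinespringMap Φ V (Finsupp.single (a, ξ, i) 1) = Φ a (V i ξ) := by
  simp [stinespringMap]

/-- The scalar coefficients are absorbed into the vectors of `H`. -/
theorem stinespringMap_apply {n : ℕ} {K : Type*} [NormedAddCommGroup K] [InnerProductSpace ℂ K]
    [CompleteSpace K] (Φ : A →⋆ₙₐ[ℂ] (K →L[ℂ] K)) (V : Fin n → (H →L[ℂ] K))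
    (f : A × H × Fin n →₀ ℂ) :
    stinespringMap Φ V f = ∑ k : Fin f.support.card,
      Φ (f.support.equivFin.symm k).1.1 (V (f.support.equivFin.symm k).1.2.2
        (f (f.support.equivFin.symm k).1 • (f.support.equivFin.symm k).1.2.1)) := by
  rw [f.support.equivFin.symm.sum_comp (fun s => Φ s.1.1 (V s.1.2.2 (f s.1 • s.1.2.1))),
    Finset.sum_coe_sort f.support (fun s => Φ s.1 (V s.2.2 (f s • s.2.1)))]
  simp [stinespringMap, Finsupp.linearCombination_apply, Finsupp.sum]

theorem IsStinespringRep.denseRange {n : ℕ} {ρ : Fin n → Fin n → (A →L[ℂ] (H →L[ℂ] H))}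
    {K : Type*} [NormedAddCommGroup K] [InnerProductSpace ℂ K] [CompleteSpace K]
    {Φ : A →⋆ₙₐ[ℂ] (K →L[ℂ] K)} {V : Fin n → (H →L[ℂ] K)} (h : IsStinespringRep ρ Φ V) :
    DenseRange (stinespringMap Φ V) := by
  refine h.2.2.mono ?_
  rw [← LinearMap.coe_range, SetLike.coe_subset_coe, Submodule.span_le]
  rintro x ⟨a, ξ, i, rfl⟩
  exact ⟨Finsupp.single (a, ξ, i) 1, stinespringMap_single Φ V a ξ i⟩

/-- The norm comparison that makes `Φ a (V i ξ) ↦ Φ' a (V' i ξ)` a well-defined contraction. -/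
theorem norm_stinespringMap_le {n : ℕ} {ρ θ : Fin n → Fin n → (A →L[ℂ] (H →L[ℂ] H))}
    (hle : IsCnP (fun i j => ρ i j - θ i j))
    {K : Type*} [NormedAddCommGroup K] [InnerProductSpace ℂ K] [CompleteSpace K]
    {K' : Type*} [NormedAddCommGroup K'] [InnerProductSpace ℂ K'] [CompleteSpace K']
    {Φ : A →⋆ₙₐ[ℂ] (K →L[ℂ] K)} {V : Fin n → (H →L[ℂ] K)}
    {Φ' : A →⋆ₙₐ[ℂ] (K' →L[ℂ] K')} {V' : Fin n → (H →L[ℂ] K')}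
    (h : IsStinespringRep ρ Φ V) (h' : IsStinespringRep θ Φ' V') (f : A × H × Fin n →₀ ℂ) :
    ‖stinespringMap Φ' V' f‖ ≤ ‖stinespringMap Φ V f‖ := by
  refine le_of_sq_le_sq ?_ (norm_nonneg _)
  rw [stinespringMap_apply, stinespringMap_apply, h.normSq_sum, h'.normSq_sum, ← sub_nonneg,
    ← Complex.sub_re, ← Finset.sum_sub_distrib]
  simp only [← Finset.sum_sub_distrib, ← inner_sub_right]
  exact hle.re_sum_inner_nonneg _ _ _

/-- If `θ ≤ ρ` are completely `n`-positive maps, there is a contraction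
`W : H_ρ → H_θ` with `W V_{ρ,i} = V_{θ,i}` intertwining the Stinespring
representations. -/
theorem statement10 {n : ℕ} (ρ θ : Fin n → Fin n → (A →L[ℂ] (H →L[ℂ] H)))
    (hρ : IsCnP ρ) (hθ : IsCnP θ) (hle : IsCnP (fun i j => ρ i j - θ i j))
    {K : Type*} [NormedAddCommGroup K] [InnerProductSpace ℂ K] [CompleteSpace K]
    {K' : Type*} [NormedAddCommGroup K'] [InnerProductSpace ℂ K'] [CompleteSpace K']
    (Φ : A →⋆ₙₐ[ℂ] (K →L[ℂ] K)) (V : Fin n → (H →L[ℂ] K))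
    (Φ' : A →⋆ₙₐ[ℂ] (K' →L[ℂ] K')) (V' : Fin n → (H →L[ℂ] K'))
    (h : IsStinespringRep ρ Φ V) (h' : IsStinespringRep θ Φ' V') :
    ∃ W : K →L[ℂ] K', ‖W‖ ≤ 1 ∧ (∀ i, W.comp (V i) = V' i) ∧
      (∀ a : A, W.comp (Φ a) = (Φ' a).comp W) := by
  have hd := h.denseRange
  have hn : ∀ f, ‖stinespringMap Φ' V' f‖ ≤ 1 * ‖stinespringMap Φ V f‖ := fun f => by
    rw [one_mul]
    exact norm_stinespringMap_le hle h h' f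
  let W : K →L[ℂ] K' := (stinespringMap Φ' V').extendOfNorm (stinespringMap Φ V)
  have hW : ∀ a ξ i, W (Φ a (V i ξ)) = Φ' a (V' i ξ) := fun a ξ i => by
    rw [← stinespringMap_single Φ V, ← stinespringMap_single Φ' V']
    exact LinearMap.extendOfNorm_eq hd ⟨1, hn⟩ _
  have hint : ∀ a : A, W.comp (Φ a) = (Φ' a).comp W := fun a => by
    refine ContinuousLinearMap.ext_on h.2.2 ?_
    rintro _ ⟨b, ξ, i, rfl⟩
    have h1 := hW (a * b) ξ i
    simp only [map_mul, mul_apply_eq_comp] at h1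
    simp only [ContinuousLinearMap.comp_apply, h1, hW]
  refine ⟨W, LinearMap.opNorm_extendOfNorm_le hd zero_le_one hn, fun i => ?_, hint⟩
  ext ξ
  rw [ContinuousLinearMap.comp_apply, ← sub_eq_zero]
  -- Nondegeneracy of `Φ'` stands in for the unit that `A` may lack.
  have hker : ∀ a : A, Φ' a (W (V i ξ) - V' i ξ) = 0 := fun a => by
    have h1 := DFunLike.congr_fun (hint a) (V i ξ)
    simp only [ContinuousLinearMap.comp_apply] at h1
    rw [map_sub, ← h1, hW, sub_self]
  refine Dense.eq_zero_of_inner_left (𝕜 := ℂ) h'.denseRange fun v hv => ?_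
  obtain ⟨f, rfl⟩ := hv
  rw [stinespringMap, Finsupp.linearCombination_apply, Finsupp.sum, inner_sum]
  refine Finset.sum_eq_zero fun s _ => ?_
  rw [inner_smul_right, ← adjoint_inner_left, ← star_eq_adjoint, ← map_star, hker,
    inner_zero_left, mul_zero]
end
end
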